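/- Let C be a smooth addable class of finite simple graphs with C_n nonempty for every n ≥ 1. Then the probability that the uniformly random graph R_n(C) is not connected converges to some limit c with c ≤ 1 − e^{−1/2}, and for every sentence φ of first-order logic in the language of graphs, the probability that R_n(C) satisfies φ converges to a value p such that either p ≤ c or p ≥ 1 − c. -/

import Mathlib

open Filter Topology FirstOrder

/-- A class of finite simple graphs, given as a property of simple graphs
on arbitrary finite vertex types. -/
abbrev GraphClassOn := ∀ (V : Type) [Finite V], SimpleGraph V → Prop

/-- The class is invariant under graph isomorphism. -/
def ClassIsoInvariant (C : GraphClassOn) : Prop :=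
  ∀ (V W : Type) [Finite V] [Finite W] (G : SimpleGraph V) (H : SimpleGraph W),
    Nonempty (G ≃g H) → (C V G ↔ C W H)

/-- The class is bridge-addable: one may add an edge between two vertices lying in
distinct connected components. -/
def ClassBridgeAddable (C : GraphClassOn) : Prop :=
  ∀ (V : Type) [Finite V] (G : SimpleGraph V) (u v : V),
    C V G → ¬G.Reachable u v → C V (G ⊔ SimpleGraph.fromEdgeSet {s(u, v)})

/-- The class is decomposable: a graph belongs to the class iff each of its connected
components does. -/
def ClassDecomposable (C : GraphClassOn) : Prop :=
  ∀ (V : Type) [Finite V] (G : SimpleGraph V),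
    C V G ↔ ∀ c : G.ConnectedComponent, C c.supp (G.induce c.supp)

/-- Addable = decomposable and bridge-addable. -/
def ClassAddable (C : GraphClassOn) : Prop :=
  ClassDecomposable C ∧ ClassBridgeAddable C

/-- The number of graphs in the class on the vertex set `Fin n`. -/
noncomputable def classCount (C : GraphClassOn) (n : ℕ) : ℕ :=
  Nat.card {G : SimpleGraph (Fin n) // C (Fin n) G}

/-- The class is small: `c_n ≤ d^n · n!` for some real `d`. -/
def ClassSmall (C : GraphClassOn) : Prop :=
  ∃ d : ℝ, ∀ n : ℕ, (classCount C n : ℝ) ≤ d ^ n * n.factorial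

/-- The class is smooth: `c_n / (n · c_{n-1})` tends to a finite limit. -/
def ClassSmooth (C : GraphClassOn) : Prop :=
  ∃ γ : ℝ, Tendsto (fun n : ℕ => (classCount C n : ℝ) / (n * classCount C (n - 1)))
    atTop (𝓝 γ)

/-- The probability that a uniformly random graph from the class on `Fin n`
satisfies the property `P`. -/
noncomputable def classProb (C : GraphClassOn) (n : ℕ) (P : SimpleGraph (Fin n) → Prop) : ℝ :=
  (Nat.card {G : SimpleGraph (Fin n) // C (Fin n) G ∧ P G} : ℝ) / (classCount C n : ℝ)

/-- The probability that a uniformly random *connected* graph from the class on `Fin n`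
satisfies the property `P`. -/
noncomputable def connClassProb (C : GraphClassOn) (n : ℕ)
    (P : SimpleGraph (Fin n) → Prop) : ℝ :=
  (Nat.card {G : SimpleGraph (Fin n) // (C (Fin n) G ∧ G.Connected) ∧ P G} : ℝ) /
    (Nat.card {G : SimpleGraph (Fin n) // C (Fin n) G ∧ G.Connected} : ℝ)

/-- Satisfaction of a first-order sentence in the language of graphs in a simple graph. -/
def SatFO {V : Type} (G : SimpleGraph V) (φ : Language.graph.Sentence) : Prop :=
  letI := G.structure
  V ⊨ φ

/-- The rooted graph `(H, r)` appears in `G` on the vertex set `W`: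
the induced subgraph of `G` on `W` is isomorphic to `H` via an isomorphism sending some
`w ∈ W` to `r`, every edge of `G` joining `W` to its complement is incident on `w`,
and there is exactly one such edge. -/
def AppearsAt {VH V : Type} (H : SimpleGraph VH) (r : VH) (G : SimpleGraph V)
    (W : Set V) : Prop :=
  ∃ (w : V) (hw : w ∈ W) (e : G.induce W ≃g H),
    e ⟨w, hw⟩ = r ∧
    (∀ a ∈ W, ∀ b ∉ W, G.Adj a b → a = w) ∧
    (∃! b, b ∉ W ∧ G.Adj w b)

/-- The rooted graph `(H, r)` appears in `G`. -/
def Appears {VH V : Type} (H : SimpleGraph VH) (r : VH) (G : SimpleGraph V) : Prop :=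
  ∃ W : Set V, AppearsAt H r G W

/-- The number of appearances of the rooted graph `(H, r)` in `G`, i.e. the number of
vertex sets `W` witnessing an appearance. -/
noncomputable def numAppearances {VH V : Type} (H : SimpleGraph VH) (r : VH)
    (G : SimpleGraph V) : ℕ :=
  Nat.card {W : Set V // AppearsAt H r G W}

/-- The number of connected components of `G` whose induced subgraph is isomorphic
to `H`. -/
noncomputable def numComponentsIso {V VH : Type} (G : SimpleGraph V)
    (H : SimpleGraph VH) : ℕ :=
  Nat.card {c : G.ConnectedComponent // Nonempty (G.induce c.supp ≃g H)}


/-! ### Ehrenfeucht-Fraisse games -/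

/-- Partial isomorphism given by a set of pairs. -/
def PIso {V W : Type} (G : SimpleGraph V) (H : SimpleGraph W) (P : Set (V × W)) : Prop :=
  ∀ p ∈ P, ∀ q ∈ P, (p.1 = q.1 ↔ p.2 = q.2) ∧ (G.Adj p.1 q.1 ↔ H.Adj p.2 q.2)

/-- Duplicator wins the `k`-round game from the position `P`. -/
def EFG {V W : Type} (G : SimpleGraph V) (H : SimpleGraph W) : ℕ → Set (V × W) → Prop
  | 0, P => PIso G H P
  | k + 1, P => PIso G H P ∧ (∀ v, ∃ w, EFG G H k (insert (v, w) P)) ∧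
      (∀ w, ∃ v, EFG G H k (insert (v, w) P))

theorem EFG.pIso {V W : Type} {G : SimpleGraph V} {H : SimpleGraph W} {k : ℕ} {P : Set (V × W)}
    (h : EFG G H k P) : PIso G H P := by
  cases k with
  | zero => exact h
  | succ k => exact h.1

open FirstOrder.Language in
theorem graph_term_var {α : Type} (t : Language.graph.Term α) : ∃ a, t = Term.var a := by
  cases t with
  | var a => exact ⟨a, rfl⟩
  | func f _ => exact f.elim

open FirstOrder.Language in
theorem EFG_formula {α : Type} {n : ℕ} (φ : Language.graph.BoundedFormula α n) :
    ∃ k, ∀ k' ≥ k, ∀ (V W : Type) (G : SimpleGraph V) (H : SimpleGraph W) (P : Set (V × W))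
      (x : α → V) (y : α → W) (xs : Fin n → V) (ys : Fin n → W),
      (∀ a, (x a, y a) ∈ P) → (∀ i, (xs i, ys i) ∈ P) → EFG G H k' P →
      ((letI := G.structure; φ.Realize x xs) ↔ (letI := H.structure; φ.Realize y ys)) := by
  induction φ with
  | falsum => exact ⟨0, fun _ _ _ _ _ _ _ _ _ _ _ _ _ _ => Iff.rfl⟩
  | equal t₁ t₂ =>
    refine ⟨0, fun k' _ V W G H P x y xs ys hx hy h => ?_⟩
    obtain ⟨a, rfl⟩ := graph_term_var t₁
    obtain ⟨b, rfl⟩ := graph_term_var t₂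
    have hP := h.pIso
    have key : ∀ c, (Sum.elim x xs c, Sum.elim y ys c) ∈ P := by
      rintro (c | c)
      · exact hx c
      · exact hy c
    exact (hP _ (key a) _ (key b)).1
  | rel R ts =>
    refine ⟨0, fun k' _ V W G H P x y xs ys hx hy h => ?_⟩
    have hP := h.pIso
    have key : ∀ c, (Sum.elim x xs c, Sum.elim y ys c) ∈ P := by
      rintro (c | c)
      · exact hx c
      · exact hy c
    cases R
    obtain ⟨a, ha⟩ := graph_term_var (ts 0)
    obtain ⟨b, hb⟩ := graph_term_var (ts 1)
    have := (hP _ (key a) _ (key b)).2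
    change G.Adj _ _ ↔ H.Adj _ _
    beta_reduce
    rw [ha, hb]
    exact this
  | imp f₁ f₂ ih₁ ih₂ =>
    obtain ⟨k₁, h₁⟩ := ih₁
    obtain ⟨k₂, h₂⟩ := ih₂
    refine ⟨max k₁ k₂, fun k' hk V W G H P x y xs ys hx hy h => ?_⟩
    have e₁ := h₁ k' (le_trans (le_max_left _ _) hk) V W G H P x y xs ys hx hy h
    have e₂ := h₂ k' (le_trans (le_max_right _ _) hk) V W G H P x y xs ys hx hy h
    simp only [BoundedFormula.realize_imp]
    exact imp_congr e₁ e₂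
  | all f ih =>
    obtain ⟨k, hk⟩ := ih
    refine ⟨k + 1, fun k' hk' V W G H P x y xs ys hx hy h => ?_⟩
    obtain ⟨k'', rfl⟩ : ∃ m, k' = m + 1 := ⟨k' - 1, by omega⟩
    obtain ⟨-, h1, h2⟩ := h
    have main : ∀ v w, EFG G H k'' (insert (v, w) P) →
        ((letI := G.structure; f.Realize x (Fin.snoc xs v)) ↔
          (letI := H.structure; f.Realize y (Fin.snoc ys w))) := by
      intro v w hvw
      refine hk k'' (by omega) V W G H _ x y _ _ (fun a => Set.mem_insert_of_mem _ (hx a)) ?_ hvw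
      intro i
      refine Fin.lastCases ?_ (fun j => ?_) i
      · simp
      · simp only [Fin.snoc_castSucc]
        exact Set.mem_insert_of_mem _ (hy j)
    simp only [BoundedFormula.realize_all]
    constructor
    · intro hv w
      obtain ⟨v, hvw⟩ := h2 w
      exact (main v w hvw).1 (hv v)
    · intro hw v
      obtain ⟨w, hvw⟩ := h1 v
      exact (main v w hvw).2 (hw w)

theorem EFG_sentence (φ : Language.graph.Sentence) :
    ∃ k, ∀ (V W : Type) (G : SimpleGraph V) (H : SimpleGraph W) (P : Set (V × W)),
      EFG G H k P → (SatFO G φ ↔ SatFO H φ) := by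
  obtain ⟨k, hk⟩ := EFG_formula φ
  refine ⟨k, fun V W G H P h => ?_⟩
  exact hk k le_rfl V W G H P default default default default
    (fun a => a.elim) (fun i => i.elim0) h

/-! ### Isomorphic graphs satisfy the same sentences -/

theorem EFG_iso {V W : Type} {G : SimpleGraph V} {H : SimpleGraph W} (e : G ≃g H) (k : ℕ) :
    EFG G H k {p | p.2 = e p.1} := by
  have hP : PIso G H {p | p.2 = e p.1} := by
    rintro ⟨a, a'⟩ ha ⟨b, b'⟩ hb
    change a' = e a at ha
    change b' = e b at hb
    subst ha hb
    exact ⟨e.injective.eq_iff.symm, e.map_adj_iff.symm⟩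
  induction k with
  | zero => exact hP
  | succ k ih =>
    refine ⟨hP, fun v => ⟨e v, ?_⟩, fun w => ⟨e.symm w, ?_⟩⟩
    · rwa [Set.insert_eq_of_mem]; simp
    · rwa [Set.insert_eq_of_mem]; simp

theorem SatFO_iso {V W : Type} {G : SimpleGraph V} {H : SimpleGraph W} (e : G ≃g H)
    (φ : Language.graph.Sentence) : SatFO G φ ↔ SatFO H φ := by
  obtain ⟨k, hk⟩ := EFG_sentence φ
  exact hk V W G H _ (EFG_iso e k)

/-! ### Local games -/

/-- Distance-recording partial isomorphisms. -/
def LRec {V W : Type} (G : SimpleGraph V) (H : SimpleGraph W) (k : ℕ) (P : Set (V × W)) : Prop :=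
  PIso G H P ∧ ∀ p ∈ P, ∀ q ∈ P, ∀ i ≤ k,
    (G.edist p.1 q.1 ≤ ((2 ^ i : ℕ) : ℕ∞) ↔ H.edist p.2 q.2 ≤ ((2 ^ i : ℕ) : ℕ∞))

/-- The local game: new points are chosen close to old points. -/
def LEq {V W : Type} (G : SimpleGraph V) (H : SimpleGraph W) : ℕ → Set (V × W) → Prop
  | 0, P => LRec G H 0 P
  | k + 1, P => LRec G H (k + 1) P ∧
      (∀ v, ∀ p ∈ P, G.edist p.1 v ≤ ((2 ^ k : ℕ) : ℕ∞) → ∃ w, LEq G H k (insert (v, w) P)) ∧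
      (∀ w, ∀ p ∈ P, H.edist p.2 w ≤ ((2 ^ k : ℕ) : ℕ∞) → ∃ v, LEq G H k (insert (v, w) P))

section
variable {U V W : Type} {G : SimpleGraph V} {H : SimpleGraph W} {F : SimpleGraph U}

theorem LEq.lRec {k : ℕ} {P : Set (V × W)} (h : LEq G H k P) : LRec G H k P := by
  cases k with
  | zero => exact h
  | succ k => exact h.1

theorem LEq.swap {k : ℕ} {P : Set (V × W)} (h : LEq G H k P) :
    LEq H G k (Prod.swap ⁻¹' P) := by
  have hr : ∀ {k : ℕ} {P : Set (V × W)}, LRec G H k P → LRec H G k (Prod.swap ⁻¹' P) := by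
    intro k P h
    exact ⟨fun p hp q hq => ⟨(h.1 _ hp _ hq).1.symm, (h.1 _ hp _ hq).2.symm⟩,
      fun p hp q hq i hi => (h.2 _ hp _ hq i hi).symm⟩
  have hins : ∀ (v : V) (w : W) (P : Set (V × W)),
      insert (w, v) (Prod.swap ⁻¹' P) = Prod.swap ⁻¹' (insert (v, w) P) := by
    intro v w P
    ext ⟨a, b⟩
    simp [Prod.ext_iff, and_comm]
  induction k generalizing P with
  | zero => exact hr h
  | succ k ih =>
    obtain ⟨h0, h1, h2⟩ := h
    refine ⟨hr h0, fun w p hp hd => ?_, fun v p hp hd => ?_⟩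
    · obtain ⟨v, hv⟩ := h2 w _ hp hd
      exact ⟨v, hins v w P ▸ ih hv⟩
    · obtain ⟨w, hw⟩ := h1 v _ hp hd
      exact ⟨w, hins v w P ▸ ih hw⟩

theorem LRec.mono {k k' : ℕ} {P Q : Set (V × W)} (h : LRec G H k P) (hQ : Q ⊆ P) (hk : k' ≤ k) :
    LRec G H k' Q :=
  ⟨fun p hp q hq => h.1 p (hQ hp) q (hQ hq),
    fun p hp q hq i hi => h.2 p (hQ hp) q (hQ hq) i (hi.trans hk)⟩

theorem LEq.subset {k : ℕ} {P Q : Set (V × W)} (h : LEq G H k P) (hQ : Q ⊆ P) :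
    LEq G H k Q := by
  induction k generalizing P Q with
  | zero => exact h.lRec.mono hQ le_rfl
  | succ k ih =>
    obtain ⟨h0, h1, h2⟩ := h
    refine ⟨h0.mono hQ le_rfl, fun v p hp hd => ?_, fun w p hp hd => ?_⟩
    · obtain ⟨w, hw⟩ := h1 v p (hQ hp) hd
      exact ⟨w, ih hw (Set.insert_subset_insert hQ)⟩
    · obtain ⟨v, hv⟩ := h2 w p (hQ hp) hd
      exact ⟨v, ih hv (Set.insert_subset_insert hQ)⟩

theorem LEq.pred {k : ℕ} {P : Set (V × W)} (h : LEq G H (k + 1) P) : LEq G H k P := by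
  induction k generalizing P with
  | zero => exact h.lRec.mono subset_rfl (by omega)
  | succ k ih =>
    obtain ⟨h0, h1, h2⟩ := h
    have hle : ((2 ^ k : ℕ) : ℕ∞) ≤ ((2 ^ (k + 1) : ℕ) : ℕ∞) := by
      exact_mod_cast Nat.pow_le_pow_right (by norm_num) (by omega)
    refine ⟨h0.mono subset_rfl (by omega), fun v p hp hd => ?_, fun w p hp hd => ?_⟩
    · obtain ⟨w, hw⟩ := h1 v p hp (hd.trans hle)
      exact ⟨w, ih hw⟩
    · obtain ⟨v, hv⟩ := h2 w p hp (hd.trans hle)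
      exact ⟨v, ih hv⟩

theorem LEq.le {k k' : ℕ} {P : Set (V × W)} (h : LEq G H k P) (hk : k' ≤ k) : LEq G H k' P := by
  induction hk with
  | refl => exact h
  | step _ ih => exact ih h.pred

/-- Composition of sets of pairs. -/
def relComp (P : Set (U × V)) (Q : Set (V × W)) : Set (U × W) :=
  {p | ∃ y, (p.1, y) ∈ P ∧ (y, p.2) ∈ Q}

theorem insert_relComp_subset (P : Set (U × V)) (Q : Set (V × W)) (u : U) (v : V) (w : W) :
    insert (u, w) (relComp P Q) ⊆ relComp (insert (u, v) P) (insert (v, w) Q) := by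
  rintro ⟨a, b⟩ (h | ⟨y, h1, h2⟩)
  · obtain ⟨rfl, rfl⟩ := Prod.ext_iff.1 h
    exact ⟨v, Set.mem_insert _ _, Set.mem_insert _ _⟩
  · exact ⟨y, Set.mem_insert_of_mem _ h1, Set.mem_insert_of_mem _ h2⟩

theorem LEq.trans {k : ℕ} {P : Set (U × V)} {Q : Set (V × W)} (h : LEq F G k P)
    (h' : LEq G H k Q) : LEq F H k (relComp P Q) := by
  have hr : ∀ {k : ℕ} {P : Set (U × V)} {Q : Set (V × W)}, LRec F G k P → LRec G H k Q →
      LRec F H k (relComp P Q) := by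
    intro k P Q h h'
    constructor
    · rintro p ⟨y, h1, h2⟩ q ⟨z, h3, h4⟩
      exact ⟨(h.1 _ h1 _ h3).1.trans (h'.1 _ h2 _ h4).1, (h.1 _ h1 _ h3).2.trans (h'.1 _ h2 _ h4).2⟩
    · rintro p ⟨y, h1, h2⟩ q ⟨z, h3, h4⟩ i hi
      exact (h.2 _ h1 _ h3 i hi).trans (h'.2 _ h2 _ h4 i hi)
  induction k generalizing P Q with
  | zero => exact hr h h'
  | succ k ih =>
    refine ⟨hr h.1 h'.1, ?_, ?_⟩
    · rintro u p ⟨y, h1, h2⟩ hd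
      obtain ⟨v, hv⟩ := h.2.1 u _ h1 hd
      have := (hv.lRec.2 _ (Set.mem_insert_of_mem _ h1) _ (Set.mem_insert _ _) k le_rfl).1 hd
      obtain ⟨w, hw⟩ := h'.2.1 v _ h2 this
      exact ⟨w, (ih hv hw).subset (insert_relComp_subset _ _ _ _ _)⟩
    · rintro w p ⟨y, h1, h2⟩ hd
      obtain ⟨v, hv⟩ := h'.2.2 w _ h2 hd
      have := (hv.lRec.2 _ (Set.mem_insert_of_mem _ h2) _ (Set.mem_insert _ _) k le_rfl).2 hd
      obtain ⟨u, hu⟩ := h.2.2 v _ h1 this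
      exact ⟨u, (ih hu hv).subset (insert_relComp_subset _ _ _ _ _)⟩

theorem LEq.trans_single {k : ℕ} {u : U} {v : V} {w : W} (h : LEq F G k {(u, v)})
    (h' : LEq G H k {(v, w)}) : LEq F H k {(u, w)} := by
  refine (h.trans h').subset ?_
  rintro _ rfl
  exact ⟨v, rfl, rfl⟩

theorem LEq.symm_single {k : ℕ} {v : V} {w : W} (h : LEq G H k {(v, w)}) :
    LEq H G k {(w, v)} := by
  refine h.swap.subset ?_
  rintro _ rfl
  rfl

/-- `P` and `Q` are at distance more than `d`. -/
def FarPairs (G : SimpleGraph V) (H : SimpleGraph W) (d : ℕ) (P Q : Set (V × W)) : Prop :=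
  ∀ p ∈ P, ∀ q ∈ Q, (d : ℕ∞) < G.edist p.1 q.1 ∧ (d : ℕ∞) < H.edist p.2 q.2

theorem FarPairs.symm {d : ℕ} {P Q : Set (V × W)} (h : FarPairs G H d P Q) :
    FarPairs G H d Q P := by
  intro p hp q hq
  rw [SimpleGraph.edist_comm, SimpleGraph.edist_comm (G := H)]
  exact h q hq p hp

theorem far_shift {V : Type} {G : SimpleGraph V} {a b c : V} {d : ℕ}
    (h : ((d + d : ℕ) : ℕ∞) < G.edist a b) (hc : G.edist a c ≤ (d : ℕ∞)) :
    (d : ℕ∞) < G.edist c b := by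
  by_contra hcon
  push Not at hcon
  have := G.edist_triangle (u := a) (v := c) (w := b)
  have h2 : G.edist a b ≤ (d : ℕ∞) + d := this.trans (add_le_add hc hcon)
  rw [Nat.cast_add] at h
  exact absurd h (not_lt.2 h2)

theorem LRec.union {k : ℕ} {P Q : Set (V × W)} (h : LRec G H k P) (h' : LRec G H k Q)
    (hf : FarPairs G H (2 ^ k) P Q) : LRec G H k (P ∪ Q) := by
  have h1 : ∀ i ≤ k, ((2 ^ i : ℕ) : ℕ∞) ≤ ((2 ^ k : ℕ) : ℕ∞) := by
    intro i hi
    exact_mod_cast Nat.pow_le_pow_right (by norm_num) hi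
  have h0 : ((1 : ℕ) : ℕ∞) ≤ ((2 ^ k : ℕ) : ℕ∞) := by
    exact_mod_cast Nat.one_le_two_pow
  have aux : ∀ {P Q : Set (V × W)}, FarPairs G H (2 ^ k) P Q → ∀ p ∈ P, ∀ q ∈ Q,
      ((p.1 = q.1 ↔ p.2 = q.2) ∧ (G.Adj p.1 q.1 ↔ H.Adj p.2 q.2)) ∧ ∀ i ≤ k,
    (G.edist p.1 q.1 ≤ ((2 ^ i : ℕ) : ℕ∞) ↔ H.edist p.2 q.2 ≤ ((2 ^ i : ℕ) : ℕ∞)) := by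
    intro P Q hf p hp q hq
    obtain ⟨f1, f2⟩ := hf p hp q hq
    have g1 := h0.trans_lt f1
    have g2 := h0.trans_lt f2
    rw [Nat.cast_one, ← not_le, SimpleGraph.edist_le_one_iff_adj_or_eq] at g1 g2
    refine ⟨⟨by tauto, by tauto⟩, fun i hi => ?_⟩
    have e1 := (h1 i hi).trans_lt f1
    have e2 := (h1 i hi).trans_lt f2
    rw [← not_le] at e1 e2
    tauto
  constructor
  · rintro p (hp | hp) q (hq | hq)
    · exact h.1 p hp q hq
    · exact (aux hf p hp q hq).1
    · exact (aux hf.symm p hp q hq).1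
    · exact h'.1 p hp q hq
  · rintro p (hp | hp) q (hq | hq)
    · exact h.2 p hp q hq
    · exact (aux hf p hp q hq).2
    · exact (aux hf.symm p hp q hq).2
    · exact h'.2 p hp q hq

theorem LEq.union {k : ℕ} {P Q : Set (V × W)} (h : LEq G H k P) (h' : LEq G H k Q)
    (hf : FarPairs G H (2 ^ k) P Q) : LEq G H k (P ∪ Q) := by
  induction k generalizing P Q with
  | zero => exact LRec.union h h' hf
  | succ k ih =>
    have hle : ((2 ^ k : ℕ) : ℕ∞) ≤ ((2 ^ (k + 1) : ℕ) : ℕ∞) := by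
      exact_mod_cast Nat.pow_le_pow_right (by norm_num) (by omega)
    have far : ∀ {P Q : Set (V × W)} {v w} {p : V × W}, FarPairs G H (2 ^ (k + 1)) P Q →
        p ∈ P → G.edist p.1 v ≤ ((2 ^ k : ℕ) : ℕ∞) → H.edist p.2 w ≤ ((2 ^ k : ℕ) : ℕ∞) →
        FarPairs G H (2 ^ k) (insert (v, w) P) Q := by
      intro P Q v w p hf hp h1 h2 r hr q hq
      rcases hr with rfl | hr
      · have := hf p hp q hq
        rw [pow_succ, mul_two] at this
        exact ⟨far_shift this.1 h1, far_shift this.2 h2⟩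
      · exact ⟨hle.trans_lt (hf r hr q hq).1, hle.trans_lt (hf r hr q hq).2⟩
    have stepV : ∀ {P Q : Set (V × W)}, LEq G H (k + 1) P → LEq G H (k + 1) Q →
        FarPairs G H (2 ^ (k + 1)) P Q → ∀ v, ∀ p ∈ P, G.edist p.1 v ≤ ((2 ^ k : ℕ) : ℕ∞) →
        ∃ w, LEq G H k (insert (v, w) (P ∪ Q)) := by
      intro P Q h h' hf v p hp hd
      obtain ⟨w, hw⟩ := h.2.1 v p hp hd
      have hd' := (hw.lRec.2 _ (Set.mem_insert_of_mem _ hp) _ (Set.mem_insert _ _) k le_rfl).1 hd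
      refine ⟨w, ?_⟩
      rw [← Set.insert_union]
      exact ih hw h'.pred (far hf hp hd hd')
    have stepW : ∀ {P Q : Set (V × W)}, LEq G H (k + 1) P → LEq G H (k + 1) Q →
        FarPairs G H (2 ^ (k + 1)) P Q → ∀ w, ∀ p ∈ P, H.edist p.2 w ≤ ((2 ^ k : ℕ) : ℕ∞) →
        ∃ v, LEq G H k (insert (v, w) (P ∪ Q)) := by
      intro P Q h h' hf w p hp hd
      obtain ⟨v, hv⟩ := h.2.2 w p hp hd
      have hd' := (hv.lRec.2 _ (Set.mem_insert_of_mem _ hp) _ (Set.mem_insert _ _) k le_rfl).2 hd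
      refine ⟨v, ?_⟩
      rw [← Set.insert_union]
      exact ih hv h'.pred (far hf hp hd' hd)
    refine ⟨h.1.union h'.1 hf, ?_, ?_⟩
    · rintro v p (hp | hp) hd
      · exact stepV h h' hf v p hp hd
      · obtain ⟨w, hw⟩ := stepV h' h hf.symm v p hp hd
        exact ⟨w, by rwa [Set.union_comm]⟩
    · rintro w p (hp | hp) hd
      · exact stepW h h' hf w p hp hd
      · obtain ⟨v, hv⟩ := stepW h' h hf.symm w p hp hd
        exact ⟨v, by rwa [Set.union_comm]⟩

end


/-! ### Finitely many local types -/

theorem finite_types (k n : ℕ) :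
    ∃ (F : Type) (_ : Finite F) (f : (Σ m, SimpleGraph (Fin m) × (Fin n → Fin m)) → F),
      ∀ x y, f x = f y →
        LEq x.2.1 y.2.1 k (Set.range fun i => (x.2.2 i, y.2.2 i)) := by
  have base : ∀ k n : ℕ, ∃ (F : Type) (_ : Finite F)
      (f : (Σ m, SimpleGraph (Fin m) × (Fin n → Fin m)) → F),
      ∀ x y, f x = f y →
        LRec x.2.1 y.2.1 k (Set.range fun i => (x.2.2 i, y.2.2 i)) := by
    intro k n
    refine ⟨Fin n → Fin n → Prop × Prop × (Fin (k + 1) → Prop), inferInstance,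
      fun x i j => (x.2.2 i = x.2.2 j, x.2.1.Adj (x.2.2 i) (x.2.2 j),
        fun l => x.2.1.edist (x.2.2 i) (x.2.2 j) ≤ ((2 ^ (l : ℕ) : ℕ) : ℕ∞)), ?_⟩
    intro x y hxy
    constructor
    · rintro _ ⟨i, rfl⟩ _ ⟨j, rfl⟩
      have h := congrFun (congrFun hxy i) j
      simp only [Prod.mk.injEq] at h
      exact ⟨iff_of_eq h.1, iff_of_eq h.2.1⟩
    · rintro _ ⟨i, rfl⟩ _ ⟨j, rfl⟩ l hl
      have h := congrFun (congrFun hxy i) j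
      simp only [Prod.mk.injEq] at h
      exact iff_of_eq (congrFun h.2.2 ⟨l, by omega⟩)
  induction k generalizing n with
  | zero => exact base 0 n
  | succ k ih =>
    obtain ⟨F, hF, f, hf⟩ := ih (n + 1)
    obtain ⟨F', hF', f', hf'⟩ := base (k + 1) n
    refine ⟨F' × Set F, inferInstance, fun x => (f' x,
      {t | ∃ i c, x.2.1.edist (x.2.2 i) c ≤ ((2 ^ k : ℕ) : ℕ∞) ∧
        t = f ⟨x.1, x.2.1, Fin.cons c x.2.2⟩}), ?_⟩
    intro x y hxy
    obtain ⟨h1, h2⟩ := Prod.ext_iff.1 hxy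
    simp only at h1 h2
    have hrange : ∀ (a : Fin x.1) (b : Fin y.1),
        (Set.range fun i : Fin (n + 1) => ((Fin.cons a x.2.2 : Fin (n + 1) → Fin x.1) i,
          (Fin.cons b y.2.2 : Fin (n + 1) → Fin y.1) i)) =
        insert (a, b) (Set.range fun i => (x.2.2 i, y.2.2 i)) := by
      intro a b
      ext p
      simp only [Set.mem_range, Set.mem_insert_iff, Fin.exists_fin_succ, Fin.cons_zero,
        Fin.cons_succ]
      exact or_congr ⟨Eq.symm, Eq.symm⟩ Iff.rfl
    refine ⟨hf' x y h1, ?_, ?_⟩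
    · rintro v _ ⟨i, rfl⟩ hd
      have : f ⟨x.1, x.2.1, Fin.cons v x.2.2⟩ ∈ {t | ∃ i c, x.2.1.edist (x.2.2 i) c ≤ ((2 ^ k : ℕ) : ℕ∞) ∧
        t = f ⟨x.1, x.2.1, Fin.cons c x.2.2⟩} := ⟨i, v, hd, rfl⟩
      rw [h2] at this
      obtain ⟨j, w, -, hw⟩ := this
      have := hf _ _ hw
      simp only at this
      rw [hrange] at this
      exact ⟨w, this⟩
    · rintro w _ ⟨i, rfl⟩ hd
      have : f ⟨y.1, y.2.1, Fin.cons w y.2.2⟩ ∈ {t | ∃ i c, y.2.1.edist (y.2.2 i) c ≤ ((2 ^ k : ℕ) : ℕ∞) ∧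
        t = f ⟨y.1, y.2.1, Fin.cons c y.2.2⟩} := ⟨i, w, hd, rfl⟩
      rw [← h2] at this
      obtain ⟨j, v, -, hv⟩ := this
      have := hf _ _ hv.symm
      simp only at this
      rw [hrange] at this
      exact ⟨v, this⟩

/-! ### Local embeddings -/

section
variable {V W : Type} {G : SimpleGraph V} {H : SimpleGraph W}

theorem edist_le_of_weak_hom (f : V → W)
    (hf : ∀ a b, G.Adj a b → f a = f b ∨ H.Adj (f a) (f b)) (a b : V) :
    H.edist (f a) (f b) ≤ G.edist a b := by
  rw [SimpleGraph.edist_eq_sInf (G := G)]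
  refine le_sInf ?_
  rintro _ ⟨p, rfl⟩
  simp only
  induction p with
  | nil => simp
  | @cons u v w h p ih =>
    have h1 : H.edist (f u) (f v) ≤ 1 := by
      rw [SimpleGraph.edist_le_one_iff_adj_or_eq]
      rcases hf u v h with h | h
      · exact Or.inr h
      · exact Or.inl h
    refine (H.edist_triangle (v := f v)).trans ?_
    rw [SimpleGraph.Walk.length_cons, Nat.cast_add, Nat.cast_one, add_comm]
    exact add_le_add ih h1

theorem edist_hom_le (f : H ↪g G) (a b : W) : G.edist (f a) (f b) ≤ H.edist a b :=
  edist_le_of_weak_hom f (fun _ _ h => Or.inr (f.map_adj_iff.2 h)) a b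

theorem lift_walk (f : H ↪g G) (D : W → ℕ∞) (R : ℕ∞)
    (hD : ∀ z z', D z' ≤ D z + H.edist z z')
    (hcl : ∀ z, D z < R → ∀ w, G.Adj (f z) w → ∃ z', w = f z')
    {a b : V} (p : G.Walk a b) (x : W) (hx : f x = a) (hlen : D x + p.length < R) :
    ∃ y, b = f y ∧ H.edist x y ≤ p.length := by
  induction p generalizing x with
  | nil => exact ⟨x, hx.symm, by simp⟩
  | @cons u v w h p ih =>
    subst hx
    have h0 : D x < R := lt_of_le_of_lt le_self_add hlen
    obtain ⟨z, rfl⟩ := hcl x h0 v h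
    have hadj : H.Adj x z := f.map_adj_iff.1 h
    have h1 : H.edist x z ≤ 1 := by
      rw [SimpleGraph.edist_le_one_iff_adj_or_eq]; exact Or.inl hadj
    rw [SimpleGraph.Walk.length_cons, Nat.cast_add, Nat.cast_one] at hlen
    obtain ⟨y, hy, hxy⟩ := ih z rfl (by
      refine lt_of_le_of_lt ?_ hlen
      rw [add_comm (p.length : ℕ∞), ← add_assoc]
      gcongr
      exact (hD x z).trans (by gcongr))
    refine ⟨y, hy, (H.edist_triangle (v := z)).trans ?_⟩
    rw [SimpleGraph.Walk.length_cons, Nat.cast_add, Nat.cast_one, add_comm]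
    exact add_le_add hxy h1

theorem lift_edist (f : H ↪g G) (D : W → ℕ∞) (R : ℕ∞)
    (hD : ∀ z z', D z' ≤ D z + H.edist z z')
    (hcl : ∀ z, D z < R → ∀ w, G.Adj (f z) w → ∃ z', w = f z')
    (b : V) (x : W) (d : ℕ) (hlen : D x + d < R) (hb : G.edist (f x) b ≤ d) :
    ∃ y, b = f y ∧ H.edist x y ≤ d := by
  have hne : G.edist (f x) b ≠ ⊤ := ne_top_of_le_ne_top (ENat.natCast_ne_top d) hb
  obtain ⟨p, hp⟩ := G.exists_walk_of_edist_ne_top hne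
  rw [← hp] at hb
  obtain ⟨y, hy, hxy⟩ := lift_walk f D R hD hcl p x rfl (lt_of_le_of_lt (by gcongr) hlen)
  exact ⟨y, hy, hxy.trans hb⟩

theorem LEq_local (f : H ↪g G) (D : W → ℕ∞) (R : ℕ∞)
    (hD : ∀ z z', D z' ≤ D z + H.edist z z')
    (hcl : ∀ z, D z < R → ∀ w, G.Adj (f z) w → ∃ z', w = f z')
    (k : ℕ) (X : Set W) (hX : ∀ x ∈ X, D x + ((2 ^ k : ℕ) : ℕ∞) < R) :
    LEq H G k {p | p.1 ∈ X ∧ p.2 = f p.1} := by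
  have hrec : ∀ (k : ℕ) (X : Set W), (∀ x ∈ X, D x + ((2 ^ k : ℕ) : ℕ∞) < R) →
      LRec H G k {p | p.1 ∈ X ∧ p.2 = f p.1} := by
    intro k X hX
    constructor
    · rintro ⟨a, a'⟩ ⟨h1, h2⟩ ⟨b, b'⟩ ⟨h3, h4⟩
      simp only at h1 h2 h3 h4
      subst h2 h4
      exact ⟨f.injective.eq_iff.symm, f.map_adj_iff.symm⟩
    · rintro ⟨a, a'⟩ ⟨h1, h2⟩ ⟨b, b'⟩ ⟨h3, h4⟩ i hi
      simp only at h1 h2 h3 h4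
      subst h2 h4
      constructor
      · exact fun h => (edist_hom_le f a b).trans h
      · intro h
        obtain ⟨y, hy, hd⟩ := lift_edist f D R hD hcl (f b) a (2 ^ i)
          (lt_of_le_of_lt (by gcongr; norm_num) (hX a h1)) h
        rwa [f.injective hy]
  have hins : ∀ (X : Set W) (c : W), insert (c, f c) {p : W × V | p.1 ∈ X ∧ p.2 = f p.1} =
      {p | p.1 ∈ insert c X ∧ p.2 = f p.1} := by
    intro X c
    ext ⟨a, b⟩
    simp only [Set.mem_insert_iff, Prod.mk.injEq, Set.mem_ofPred_eq]
    constructor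
    · rintro (⟨rfl, rfl⟩ | h)
      · simp
      · exact ⟨Or.inr h.1, h.2⟩
    · rintro ⟨rfl | h, rfl⟩
      · simp
      · exact Or.inr ⟨h, rfl⟩
  induction k generalizing X with
  | zero => exact hrec 0 X hX
  | succ k ih =>
    have step : ∀ x ∈ X, ∀ c, H.edist x c ≤ ((2 ^ k : ℕ) : ℕ∞) →
        LEq H G k (insert (c, f c) {p : W × V | p.1 ∈ X ∧ p.2 = f p.1}) := by
      intro x hx c hc
      rw [hins]
      apply ih
      rintro y (rfl | hy)
      · refine lt_of_le_of_lt ?_ (hX x hx)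
        rw [pow_succ, mul_two, Nat.cast_add, ← add_assoc]
        gcongr
        exact (hD x _).trans (by gcongr)
      · refine lt_of_le_of_lt ?_ (hX y hy)
        gcongr
        · norm_num
        · omega
    refine ⟨hrec _ X hX, ?_, ?_⟩
    · rintro v ⟨a, a'⟩ ⟨h1, h2⟩ hd
      exact ⟨f v, step a h1 v hd⟩
    · rintro w ⟨a, a'⟩ ⟨h1, h2⟩ hd
      simp only at h1 h2 hd
      subst h2
      obtain ⟨c, rfl, hc⟩ := lift_edist f D R hD hcl w a (2 ^ k)
          (lt_of_le_of_lt (by gcongr <;> [norm_num; omega]) (hX a h1)) hd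
      exact ⟨c, step a h1 c hc⟩

/-- A pendant embedding: only the root has neighbours outside. -/
def Pendant (f : H ↪g G) (r : W) : Prop :=
  ∀ x b, b ∉ Set.range f → G.Adj (f x) b → x = r

theorem Pendant.edist_le {f : H ↪g G} {r : W} (h : Pendant f r) (x y : W) :
    H.edist x y ≤ G.edist (f x) (f y) := by
  classical
  let g : V → W := fun v => if hv : v ∈ Set.range f then hv.choose else r
  have hg : ∀ x, g (f x) = x := by
    intro x
    have hx : f x ∈ Set.range f := ⟨x, rfl⟩
    simp only [g, dif_pos hx]
    exact f.injective hx.choose_spec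
  have hg' : ∀ b, b ∉ Set.range f → g b = r := fun b hb => dif_neg hb
  have := edist_le_of_weak_hom (G := G) (H := H) g (by
    intro a b hab
    by_cases ha : a ∈ Set.range f
    · obtain ⟨a, rfl⟩ := ha
      by_cases hb : b ∈ Set.range f
      · obtain ⟨b, rfl⟩ := hb
        rw [hg, hg]
        exact Or.inr (f.map_adj_iff.1 hab)
      · rw [hg, hg' b hb]
        exact Or.inl (h a b hb hab)
    · by_cases hb : b ∈ Set.range f
      · obtain ⟨b, rfl⟩ := hb
        rw [hg, hg' a ha]
        exact Or.inl (h b a ha hab.symm).symm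
      · rw [hg' a ha, hg' b hb]
        exact Or.inl rfl) (f x) (f y)
  rwa [hg, hg] at this

theorem Pendant.lEq {f : H ↪g G} {r : W} (h : Pendant f r) (k : ℕ) (v : W)
    (hv : ((2 ^ k : ℕ) : ℕ∞) < H.edist v r) : LEq H G k {(v, f v)} := by
  refine (LEq_local f (H.edist v) (H.edist v r) (fun z z' => H.edist_triangle) ?_ k {v}
    ?_).subset ?_
  · intro z hz w hw
    by_contra hcon
    have : z = r := h z w (fun ⟨z', hz'⟩ => hcon ⟨z', hz'.symm⟩) hw
    rw [this] at hz
    exact lt_irrefl _ hz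
  · rintro _ rfl
    simpa using hv
  · rintro _ rfl
    exact ⟨rfl, rfl⟩

/-! ### The global game -/

theorem exists_far {q k : ℕ} (hk : k ≤ q) (s : Finset W) (hs : s.card ≤ q) (d : Fin (q + 1) → W)
    (hd : ∀ i j, i ≠ j → ((2 ^ (q + 1) : ℕ) : ℕ∞) < H.edist (d i) (d j)) :
    ∃ i, ∀ w ∈ s, ((2 ^ k : ℕ) : ℕ∞) < H.edist w (d i) := by
  by_contra hcon
  push Not at hcon
  choose g hg hg' using hcon
  obtain ⟨i, -, j, -, hij, he⟩ := Finset.exists_ne_map_eq_of_card_lt_of_maps_to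
    (s := (Finset.univ : Finset (Fin (q + 1)))) (t := s) (by simp; omega) (f := g)
    (fun i _ => hg i)
  have h1 := hg' i
  have h2 := hg' j
  rw [← he] at h2
  have h3 := H.edist_triangle (u := d i) (v := g i) (w := d j)
  rw [H.edist_comm] at h1
  have h4 := h3.trans (add_le_add h1 h2)
  have h5 := (hd i j hij).trans_le h4
  have h6 : (2 ^ (q + 1) : ℕ) < 2 ^ k + 2 ^ k := by exact_mod_cast h5
  have h7 : 2 ^ k ≤ 2 ^ q := Nat.pow_le_pow_right (by norm_num) hk
  rw [pow_succ] at h6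
  omega

theorem EFG_main (q : ℕ) (P₀ : Set (V × W))
    (cov₁ : ∀ c : V, (∃ p ∈ P₀, p.1 = c) ∨ ∀ p ∈ P₀, G.edist p.1 c = ⊤)
    (cov₂ : ∀ c : W, (∃ p ∈ P₀, p.2 = c) ∨ ∀ p ∈ P₀, H.edist p.2 c = ⊤)
    (rich₁ : ∀ c : V, (∀ p ∈ P₀, G.edist p.1 c = ⊤) → ∃ d : Fin (q + 1) → W,
      (∀ i j, i ≠ j → ((2 ^ (q + 1) : ℕ) : ℕ∞) < H.edist (d i) (d j)) ∧
      ∀ i, (∀ p ∈ P₀, H.edist p.2 (d i) = ⊤) ∧ LEq G H q {(c, d i)})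
    (rich₂ : ∀ c : W, (∀ p ∈ P₀, H.edist p.2 c = ⊤) → ∃ d : Fin (q + 1) → V,
      (∀ i j, i ≠ j → ((2 ^ (q + 1) : ℕ) : ℕ∞) < G.edist (d i) (d j)) ∧
      ∀ i, (∀ p ∈ P₀, G.edist p.1 (d i) = ⊤) ∧ LEq G H q {(d i, c)})
    (k : ℕ) (s : Finset (V × W)) (hk : s.card + k ≤ q) (h : LEq G H k (↑s ∪ P₀)) :
    EFG G H k (↑s ∪ P₀) := by
  classical
  induction k generalizing s with
  | zero => exact h.lRec.1
  | succ k ih =>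
    have fin : ∀ v w, LEq G H k (insert (v, w) (↑s ∪ P₀)) →
        EFG G H k (insert (v, w) (↑s ∪ P₀)) := by
      intro v w hvw
      have e : insert (v, w) ((s : Set (V × W)) ∪ P₀) = ↑(insert (v, w) s) ∪ P₀ := by
        rw [Finset.coe_insert, Set.insert_union]
      rw [e] at hvw ⊢
      refine ih _ ?_ hvw
      have := Finset.card_insert_le (v, w) s
      omega
    have fin' : ∀ v w, LEq G H q {(v, w)} →
        (∀ p ∈ (↑s ∪ P₀ : Set (V × W)), ((2 ^ k : ℕ) : ℕ∞) < G.edist p.1 v ∧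
          ((2 ^ k : ℕ) : ℕ∞) < H.edist p.2 w) →
        EFG G H k (insert (v, w) (↑s ∪ P₀)) := by
      intro v w hvw hfar
      apply fin
      rw [← Set.union_singleton]
      refine h.pred.union (hvw.le (by omega)) ?_
      rintro p hp _ rfl
      exact hfar p hp
    refine ⟨h.1.1, fun v => ?_, fun w => ?_⟩
    · by_cases hn : ∃ p ∈ (↑s ∪ P₀ : Set (V × W)), G.edist p.1 v ≤ ((2 ^ k : ℕ) : ℕ∞)
      · obtain ⟨p, hp, hd⟩ := hn
        obtain ⟨w, hw⟩ := h.2.1 v p hp hd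
        exact ⟨w, fin v w hw⟩
      · push Not at hn
        have hv : ∀ p ∈ P₀, G.edist p.1 v = ⊤ := by
          rcases cov₁ v with ⟨p, hp, rfl⟩ | h
          · have := hn p (Or.inr hp)
            simp at this
          · exact h
        obtain ⟨d, hd1, hd2⟩ := rich₁ v hv
        obtain ⟨i, hi⟩ := exists_far (k := k) (by omega) (s.image Prod.snd)
          ((Finset.card_image_le).trans (by omega)) d hd1
        refine ⟨d i, fin' v (d i) (hd2 i).2 ?_⟩
        intro p hp
        refine ⟨hn p hp, ?_⟩
        rcases hp with hp | hp
        · exact hi _ (Finset.mem_image_of_mem _ hp)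
        · rw [(hd2 i).1 p hp]; exact ENat.natCast_lt_top _
    · by_cases hn : ∃ p ∈ (↑s ∪ P₀ : Set (V × W)), H.edist p.2 w ≤ ((2 ^ k : ℕ) : ℕ∞)
      · obtain ⟨p, hp, hd⟩ := hn
        obtain ⟨v, hv⟩ := h.2.2 w p hp hd
        exact ⟨v, fin v w hv⟩
      · push Not at hn
        have hv : ∀ p ∈ P₀, H.edist p.2 w = ⊤ := by
          rcases cov₂ w with ⟨p, hp, rfl⟩ | h
          · have := hn p (Or.inr hp)
            simp at this
          · exact h
        obtain ⟨d, hd1, hd2⟩ := rich₂ w hv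
        obtain ⟨i, hi⟩ := exists_far (k := k) (by omega) (s.image Prod.fst)
          ((Finset.card_image_le).trans (by omega)) d hd1
        refine ⟨d i, fin' (d i) w (hd2 i).2 ?_⟩
        intro p hp
        refine ⟨?_, hn p hp⟩
        rcases hp with hp | hp
        · exact hi _ (Finset.mem_image_of_mem _ hp)
        · rw [(hd2 i).1 p hp]; exact ENat.natCast_lt_top _

end

/-! ### Disjoint unions -/

section
variable {V W U : Type} {G : SimpleGraph V} {H : SimpleGraph W} {F : SimpleGraph U}

theorem LEq_sumInl (k : ℕ) (v : V) : LEq G (G ⊕g F) k {(v, Sum.inl v)} := by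
  refine (LEq_local (SimpleGraph.Embedding.sumInl (G := G) (H := F)) (fun _ => 0) ⊤ (by simp) ?_ k {v}
    ?_).subset ?_
  · rintro z - (w | w) hw
    · exact ⟨w, rfl⟩
    · exact absurd hw (by simp)
  · rintro _ rfl
    rw [zero_add]; exact ENat.natCast_lt_top _
  · rintro _ rfl
    exact ⟨rfl, rfl⟩

theorem edist_sumInl (a b : V) : (G ⊕g F).edist (Sum.inl a) (Sum.inl b) = G.edist a b := by
  apply le_antisymm
  · exact edist_hom_le (SimpleGraph.Embedding.sumInl (G := G) (H := F)) a b
  · have : Pendant (SimpleGraph.Embedding.sumInl (G := G) (H := F)) a := by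
      rintro x (b | b) hb hadj
      · exact absurd ⟨b, rfl⟩ hb
      · exact absurd hadj (by simp)
    exact this.edist_le a b

theorem edist_sum_inl_inr (a : V) (b : U) :
    (G ⊕g F).edist (Sum.inl a) (Sum.inr b) = ⊤ := by
  apply SimpleGraph.edist_eq_top_of_not_reachable
  rintro ⟨p⟩
  have : ∀ {x y : V ⊕ U} (p : (G ⊕g F).Walk x y), x.isLeft = y.isLeft := by
    intro x y p
    induction p with
    | nil => rfl
    | @cons u v w h p ih =>
      rw [← ih]
      rcases u with u | u <;> rcases v with v | v <;> simp_all
  simpa using this p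

theorem LEq_sumInr (k : ℕ) :
    LEq (G ⊕g F) (H ⊕g F) k (Set.range fun u => (Sum.inr u, Sum.inr u)) := by
  have aux : ∀ {V : Type} (G : SimpleGraph V), LEq F (G ⊕g F) k {p | p.1 ∈ Set.univ ∧ p.2 = Sum.inr p.1} := by
    intro V G
    refine (LEq_local (SimpleGraph.Embedding.sumInr (G := G) (H := F)) (fun _ => 0) ⊤ (by simp) ?_ k
      Set.univ ?_)
    · rintro z - (w | w) hw
      · exact absurd hw (by simp)
      · exact ⟨w, rfl⟩
    · intro _ _
      rw [zero_add]; exact ENat.natCast_lt_top _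
  refine ((aux G).swap.trans (aux H)).subset ?_
  rintro _ ⟨u, rfl⟩
  exact ⟨u, ⟨trivial, rfl⟩, ⟨trivial, rfl⟩⟩

/-- One-sided richness. -/
def RichIn (G : SimpleGraph V) (H : SimpleGraph W) (q : ℕ) : Prop :=
  ∀ c : V, ∃ d : Fin (q + 1) → W,
      (∀ i j, i ≠ j → ((2 ^ (q + 1) : ℕ) : ℕ∞) < H.edist (d i) (d j)) ∧
      ∀ i, LEq G H q {(c, d i)}

theorem EFG_sum {q : ℕ} (h₁ : RichIn G H q) (h₂ : RichIn H G q) :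
    EFG (G ⊕g F) (H ⊕g F) q (Set.range fun u => (Sum.inr u, Sum.inr u)) := by
  have key : ∀ {V W : Type} {G : SimpleGraph V} {H : SimpleGraph W}, RichIn G H q →
      ∀ c : V, ∃ d : Fin (q + 1) → W ⊕ U,
      (∀ i j, i ≠ j → ((2 ^ (q + 1) : ℕ) : ℕ∞) < (H ⊕g F).edist (d i) (d j)) ∧
      ∀ i, (∀ u : U, (H ⊕g F).edist (Sum.inr u) (d i) = ⊤) ∧
        LEq (G ⊕g F) (H ⊕g F) q {(Sum.inl c, d i)} := by
    intro V W G H h c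
    obtain ⟨d, h1, h2⟩ := h c
    refine ⟨fun i => Sum.inl (d i), fun i j hij => ?_, fun i => ⟨fun u => ?_, ?_⟩⟩
    · rw [edist_sumInl]; exact h1 i j hij
    · rw [SimpleGraph.edist_comm]; exact edist_sum_inl_inr _ _
    · exact ((LEq_sumInl q c).symm_single.trans_single (h2 i)).trans_single (LEq_sumInl q (d i))
  have := EFG_main (G := G ⊕g F) (H := H ⊕g F) q (Set.range fun u => (Sum.inr u, Sum.inr u))
    ?_ ?_ ?_ ?_ q ∅ (by simp) (by simpa using LEq_sumInr q)
  · simpa using this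
  · rintro (c | c)
    · right
      rintro _ ⟨u, rfl⟩
      rw [SimpleGraph.edist_comm]; exact edist_sum_inl_inr _ _
    · exact Or.inl ⟨_, ⟨c, rfl⟩, rfl⟩
  · rintro (c | c)
    · right
      rintro _ ⟨u, rfl⟩
      rw [SimpleGraph.edist_comm]; exact edist_sum_inl_inr _ _
    · exact Or.inl ⟨_, ⟨c, rfl⟩, rfl⟩
  · rintro (c | c) hc
    · obtain ⟨d, hd, hd'⟩ := key h₁ c
      refine ⟨d, hd, fun i => ⟨?_, (hd' i).2⟩⟩
      rintro _ ⟨u, rfl⟩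
      exact (hd' i).1 u
    · have := hc _ ⟨c, rfl⟩
      simp at this
  · rintro (c | c) hc
    · obtain ⟨d, hd, hd'⟩ := key h₂ c
      refine ⟨d, hd, fun i => ⟨?_, (hd' i).2.symm_single⟩⟩
      rintro _ ⟨u, rfl⟩
      exact (hd' i).1 u
    · have := hc _ ⟨c, rfl⟩
      simp at this

end


section

variable {V W : Type} {G : SimpleGraph V} {H : SimpleGraph W}

theorem LEq_iso (e : G ≃g H) (k : ℕ) (v : V) : LEq G H k {(v, e v)} := by
  refine (LEq_local (e.toEmbedding) (fun _ => 0) ⊤ (by simp) ?_ k {v} ?_).subset ?_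
  · rintro z - w hw
    exact ⟨e.symm w, by simp⟩
  · rintro _ rfl
    simp only [zero_add]
    exact ENat.natCast_lt_top _
  · rintro _ rfl
    exact ⟨rfl, rfl⟩

theorem reach_closed (f : H ↪g G) (hcl : ∀ x b, G.Adj (f x) b → b ∈ Set.range f)
    (x : W) (b : V) (h : G.Reachable (f x) b) : ∃ y, f y = b ∧ H.Reachable x y := by
  obtain ⟨p⟩ := h
  obtain ⟨a, ha⟩ : ∃ a, a = f x := ⟨_, rfl⟩
  rw [← ha] at p
  induction p generalizing x with
  | nil => exact ⟨x, ha.symm, SimpleGraph.Reachable.refl _⟩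
  | cons hadj p ih =>
    subst ha
    obtain ⟨y, rfl⟩ := hcl _ _ hadj
    obtain ⟨z, hz, hr⟩ := ih y rfl
    exact ⟨z, hz, (f.map_adj_iff.1 hadj).reachable.trans hr⟩

theorem comp_iso (f : H ↪g G) (hcl : ∀ x b, G.Adj (f x) b → b ∈ Set.range f) (w : W) :
    Nonempty (H.induce (H.connectedComponentMk w).supp ≃g
      G.induce (G.connectedComponentMk (f w)).supp) := by
  have hmem : ∀ x : (H.connectedComponentMk w).supp, f x ∈ (G.connectedComponentMk (f w)).supp := by
    rintro ⟨x, hx⟩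
    rw [SimpleGraph.ConnectedComponent.mem_supp_iff, SimpleGraph.ConnectedComponent.eq] at hx ⊢
    exact hx.map f.toHom
  refine ⟨⟨Equiv.ofBijective (fun x => ⟨f x, hmem x⟩) ⟨?_, ?_⟩, ?_⟩⟩
  · intro x y hxy
    exact Subtype.ext (f.injective (Subtype.ext_iff.1 hxy))
  · rintro ⟨b, hb⟩
    rw [SimpleGraph.ConnectedComponent.mem_supp_iff, SimpleGraph.ConnectedComponent.eq] at hb
    obtain ⟨y, hy, hr⟩ := reach_closed f hcl w b hb.symm
    refine ⟨⟨y, ?_⟩, Subtype.ext hy⟩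
    rw [SimpleGraph.ConnectedComponent.mem_supp_iff, SimpleGraph.ConnectedComponent.eq]
    exact hr.symm
  · intro x y
    exact f.map_adj_iff

end

theorem class_iff {C : GraphClassOn} (hD : ClassDecomposable C) {V : Type} [Finite V]
    (G : SimpleGraph V) : C V G ↔ ∀ v : V,
      C (G.connectedComponentMk v).supp (G.induce (G.connectedComponentMk v).supp) := by
  rw [hD V G]
  constructor
  · intro h v
    exact h _
  · intro h c
    induction c using SimpleGraph.ConnectedComponent.ind with
    | h v => exact h v

theorem class_sum {C : GraphClassOn} (hIso : ClassIsoInvariant C) (hD : ClassDecomposable C)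
    {V W : Type} [Finite V] [Finite W] (G : SimpleGraph V) (H : SimpleGraph W) :
    C (V ⊕ W) (G ⊕g H) ↔ C V G ∧ C W H := by
  rw [class_iff hD, class_iff hD G, class_iff hD H]
  have h1 := fun v => hIso _ _ _ _ (comp_iso (SimpleGraph.Embedding.sumInl (G := G) (H := H))
    (by rintro x (b | b) hb
        · exact ⟨b, rfl⟩
        · simp at hb) v)
  have h2 := fun v => hIso _ _ _ _ (comp_iso (SimpleGraph.Embedding.sumInr (G := G) (H := H))
    (by rintro x (b | b) hb
        · simp at hb
        · exact ⟨b, rfl⟩) v)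
  constructor
  · intro h
    exact ⟨fun v => (h1 v).2 (h (Sum.inl v)), fun v => (h2 v).2 (h (Sum.inr v))⟩
  · rintro ⟨h, h'⟩ (v | v)
    · exact (h1 v).1 (h v)
    · exact (h2 v).1 (h' v)

/-- Two rooted graphs joined by a bridge between the roots. -/
def joinG {V W : Type} (G : SimpleGraph V) (r : V) (H : SimpleGraph W) (u : W) :
    SimpleGraph (V ⊕ W) :=
  (G ⊕g H) ⊔ SimpleGraph.fromEdgeSet {s(Sum.inl r, Sum.inr u)}

section
variable {V W : Type} {G : SimpleGraph V} {H : SimpleGraph W} {r : V} {u : W}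

@[simp] theorem joinG_ll (a b : V) : (joinG G r H u).Adj (Sum.inl a) (Sum.inl b) ↔ G.Adj a b := by
  simp [joinG]
@[simp] theorem joinG_rr (a b : W) : (joinG G r H u).Adj (Sum.inr a) (Sum.inr b) ↔ H.Adj a b := by
  simp [joinG]
@[simp] theorem joinG_lr (a : V) (b : W) :
    (joinG G r H u).Adj (Sum.inl a) (Sum.inr b) ↔ a = r ∧ b = u := by
  simp [joinG]
@[simp] theorem joinG_rl (a : V) (b : W) :
    (joinG G r H u).Adj (Sum.inr b) (Sum.inl a) ↔ a = r ∧ b = u := by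
  rw [SimpleGraph.adj_comm, joinG_lr]

def joinInl (G : SimpleGraph V) (r : V) (H : SimpleGraph W) (u : W) : G ↪g joinG G r H u :=
  ⟨⟨Sum.inl, Sum.inl_injective⟩, by simp⟩
def joinInr (G : SimpleGraph V) (r : V) (H : SimpleGraph W) (u : W) : H ↪g joinG G r H u :=
  ⟨⟨Sum.inr, Sum.inr_injective⟩, by simp⟩

theorem joinInl_apply (a : V) : joinInl G r H u a = Sum.inl a := rfl
theorem joinInr_apply (a : W) : joinInr G r H u a = Sum.inr a := rfl

theorem joinInl_pendant : Pendant (joinInl G r H u) r := by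
  rintro x (b | b) hb h
  · exact absurd ⟨b, rfl⟩ hb
  · rw [joinInl_apply, joinG_lr] at h
    exact h.1
theorem joinInr_pendant : Pendant (joinInr G r H u) u := by
  rintro x (b | b) hb h
  · rw [joinInr_apply, joinG_rl] at h
    exact h.2
  · exact absurd ⟨b, rfl⟩ hb

theorem join_connected (hG : G.Connected) (hH : H.Connected) : (joinG G r H u).Connected := by
  have : ∀ x, (joinG G r H u).Reachable x (Sum.inl r) := by
    rintro (x | x)
    · exact (hG.preconnected x r).map (joinInl G r H u).toHom
    · refine ((hH.preconnected x u).map (joinInr G r H u).toHom).trans ?_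
      apply SimpleGraph.Adj.reachable
      exact (joinG_rl r u).2 ⟨rfl, rfl⟩
  rw [SimpleGraph.connected_iff]
  exact ⟨fun x y => (this x).trans (this y).symm, ⟨Sum.inl r⟩⟩

theorem join_class {C : GraphClassOn} (hIso : ClassIsoInvariant C) (hAdd : ClassAddable C)
    [Finite V] [Finite W] (hG : C V G) (hH : C W H) : C (V ⊕ W) (joinG G r H u) := by
  refine hAdd.2 _ _ _ _ ((class_sum hIso hAdd.1 G H).2 ⟨hG, hH⟩) ?_
  intro h
  obtain ⟨y, hy, -⟩ := reach_closed (SimpleGraph.Embedding.sumInl (G := G) (H := H))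
    (by rintro x (b | b) hb
        · exact ⟨b, rfl⟩
        · simp at hb) r (Sum.inr u) h
  exact absurd hy (by simp)

theorem join_edist_r (a : V) (b : W) :
    H.edist b u ≤ (joinG G r H u).edist (Sum.inr b) (Sum.inl a) := by
  refine edist_le_of_weak_hom (Sum.elim (fun _ => u) id) ?_ (Sum.inr b) (Sum.inl a)
  rintro (x | x) (y | y) h <;> simp at h <;> simp [h]

theorem join_edist_l (a : V) (b : W) :
    G.edist a r ≤ (joinG G r H u).edist (Sum.inl a) (Sum.inr b) := by
  refine edist_le_of_weak_hom (Sum.elim id (fun _ => r)) ?_ (Sum.inl a) (Sum.inr b)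
  rintro (x | x) (y | y) h <;> simp at h <;> simp [h]

end

theorem class_punit {C : GraphClassOn} (hIso : ClassIsoInvariant C)
    (hne : ∀ n : ℕ, 1 ≤ n → ∃ G : SimpleGraph (Fin n), C (Fin n) G) :
    C Unit ⊥ := by
  obtain ⟨G, hG⟩ := hne 1 le_rfl
  refine (hIso _ _ G ⊥ ⟨⟨(Equiv.ofUnique (Fin 1) Unit), ?_⟩⟩).1 hG
  intro a b
  have : a = b := Subsingleton.elim _ _
  simp [this]

theorem path_exists {C : GraphClassOn} (hIso : ClassIsoInvariant C) (hAdd : ClassAddable C)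
    (hne : ∀ n : ℕ, 1 ≤ n → ∃ G : SimpleGraph (Fin n), C (Fin n) G) (n : ℕ) :
    ∃ (V : Type) (_ : Finite V) (G : SimpleGraph V) (r y : V), C V G ∧ G.Connected ∧
      ((n : ℕ) : ℕ∞) ≤ G.edist r y := by
  -- 1-Lipschitz witness
  suffices h : ∃ (V : Type) (_ : Finite V) (G : SimpleGraph V) (r y : V) (f : V → ℕ), C V G ∧
      G.Connected ∧ (∀ a b, G.Adj a b → f a ≤ f b + 1) ∧ f r = n ∧ f y = 0 by
    obtain ⟨V, hV, G, r, y, f, h1, h2, h3, h4, h5⟩ := h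
    refine ⟨V, hV, G, r, y, h1, h2, ?_⟩
    rw [SimpleGraph.edist_eq_sInf]
    refine le_sInf ?_
    rintro _ ⟨p, rfl⟩
    have : ∀ {a b : V} (p : G.Walk a b), f a ≤ f b + p.length := by
      intro a b p
      induction p with
      | nil => simp
      | cons h p ih =>
        have := h3 _ _ h
        simp only [SimpleGraph.Walk.length_cons]
        omega
    have := this p
    simp only [Nat.cast_le]
    omega
  induction n with
  | zero =>
    refine ⟨Unit, inferInstance, ⊥, (), (), fun _ => 0, class_punit hIso hne, ?_, by simp, rfl, rfl⟩
    rw [SimpleGraph.connected_iff]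
    exact ⟨fun _ _ => by rfl, inferInstance⟩
  | succ n ih =>
    obtain ⟨V, hV, G, r, y, f, h1, h2, h3, h4, h5⟩ := ih
    refine ⟨V ⊕ Unit, inferInstance, joinG G r ⊥ (), Sum.inr (), Sum.inl y,
      Sum.elim f (fun _ => n + 1), join_class hIso hAdd h1 (class_punit hIso hne),
      join_connected h2 ?_, ?_, rfl, h5⟩
    · rw [SimpleGraph.connected_iff]
      exact ⟨fun _ _ => by rfl, inferInstance⟩
    · rintro (x | x) (z | z) h <;> simp at h <;> simp [h, h4]
      exact h3 _ _ h
      omega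


theorem Appears.pendant {VH V : Type} {M : SimpleGraph VH} {r : VH} {G : SimpleGraph V}
    (h : Appears M r G) : ∃ f : M ↪g G, Pendant f r := by
  obtain ⟨S, w, hw, e, he, h1, -⟩ := h
  refine ⟨(SimpleGraph.Embedding.induce S).comp e.symm.toEmbedding, ?_⟩
  intro x b hb hadj
  have hx : ((SimpleGraph.Embedding.induce S).comp e.symm.toEmbedding) x = (e.symm x : V) := rfl
  rw [hx] at hadj
  have hb' : b ∉ S := by
    intro hbS
    apply hb
    refine ⟨e ⟨b, hbS⟩, ?_⟩
    change ((e.symm (e ⟨b, hbS⟩) : S) : V) = b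
    simp
  have := h1 _ (e.symm x).2 b hb' hadj
  have h2 : e.symm x = ⟨w, hw⟩ := Subtype.ext this
  rw [← he, ← h2]
  simp

theorem model_step {C : GraphClassOn} (hIso : ClassIsoInvariant C) (hAdd : ClassAddable C)
    (hne : ∀ n : ℕ, 1 ≤ n → ∃ G : SimpleGraph (Fin n), C (Fin n) G) (q E : ℕ) (hE : 2 ^ q ≤ E)
    {ι : Type} (B : ι → Type) [∀ i, Finite (B i)] (Gt : ∀ i, SimpleGraph (B i))
    (vt ut : ∀ i, B i) (hC : ∀ i, C _ (Gt i)) (hconn : ∀ i, (Gt i).Connected)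
    (hfar : ∀ i, (E : ℕ∞) < (Gt i).edist (vt i) (ut i)) (s : Finset ι) :
    ∃ (V : Type) (_ : Finite V) (M : SimpleGraph V) (r p p' : V) (x : ι → V),
      C V M ∧ M.Connected ∧ ((2 * E + 1 : ℕ) : ℕ∞) ≤ M.edist p p' ∧
      (∀ i ∈ s, (E : ℕ∞) < M.edist (x i) r) ∧
      (∀ i ∈ s, ∀ j ∈ s, i ≠ j → (E : ℕ∞) < M.edist (x i) (x j)) ∧
      ∀ i ∈ s, LEq (Gt i) M q {(vt i, x i)} := by
  classical
  induction s using Finset.induction_on with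
  | empty =>
    obtain ⟨V, hV, G, r, y, h1, h2, h3⟩ := path_exists hIso hAdd hne (2 * E + 1)
    exact ⟨V, hV, G, r, r, y, fun _ => r, h1, h2, h3, by simp, by simp, by simp⟩
  | insert a s ha ih =>
    obtain ⟨V, hV, M, r, p, p', x, h1, h2, h3, h4, h5, h6⟩ := ih
    have hEq : ((2 ^ q : ℕ) : ℕ∞) ≤ E := by exact_mod_cast hE
    have hx1 : ∀ i, i ∈ s → i ≠ a := fun i hi h => ha (h ▸ hi)
    refine ⟨V ⊕ B a, inferInstance, joinG M r (Gt a) (ut a), Sum.inl r, Sum.inl p, Sum.inl p',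
      fun i => if i = a then Sum.inr (vt a) else Sum.inl (x i),
      join_class hIso hAdd h1 (hC a), join_connected h2 (hconn a),
      h3.trans (joinInl_pendant.edist_le p p'), ?_, ?_, ?_⟩
    · intro i hi
      rcases Finset.mem_insert.1 hi with rfl | hi
      · simp only [if_true]
        exact (hfar i).trans_le (join_edist_r _ _)
      · simp only [if_neg (hx1 i hi)]
        exact (h4 i hi).trans_le (joinInl_pendant.edist_le _ _)
    · intro i hi j hj hij
      rcases Finset.mem_insert.1 hi with rfl | hii <;> rcases Finset.mem_insert.1 hj with rfl | hjj
      · exact absurd rfl hij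
      · simp only [if_true, if_neg (hx1 j hjj)]
        exact (hfar i).trans_le (join_edist_r _ _)
      · simp only [if_true, if_neg (hx1 i hii)]
        exact (h4 i hii).trans_le (join_edist_l _ _)
      · simp only [if_neg (hx1 i hii), if_neg (hx1 j hjj)]
        exact (h5 i hii j hjj hij).trans_le (joinInl_pendant.edist_le _ _)
    · intro i hi
      rcases Finset.mem_insert.1 hi with rfl | hi
      · simp only [if_true]
        exact joinInr_pendant.lEq q (vt i) (hEq.trans_lt (hfar i))
      · simp only [if_neg (hx1 i hi)]
        exact (h6 i hi).trans_single (joinInl_pendant.lEq q (x i) (hEq.trans_lt (h4 i hi)))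

theorem model_exists {C : GraphClassOn} (hIso : ClassIsoInvariant C) (hAdd : ClassAddable C)
    (hne : ∀ n : ℕ, 1 ≤ n → ∃ G : SimpleGraph (Fin n), C (Fin n) G)
    (φ : Language.graph.Sentence) :
    ∃ (V : Type) (_ : Finite V) (M : SimpleGraph V) (r : V), C V M ∧ M.Connected ∧
      ∀ (m₁ m₂ : ℕ) (J₁ : SimpleGraph (Fin m₁)) (J₂ : SimpleGraph (Fin m₂)),
        C _ J₁ → C _ J₂ → J₁.Connected → J₂.Connected → Appears M r J₁ → Appears M r J₂ →
        ∀ (b : ℕ) (H : SimpleGraph (Fin b)), SatFO (J₁ ⊕g H) φ ↔ SatFO (J₂ ⊕g H) φ := by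
  obtain ⟨q, hq⟩ := EFG_sentence φ
  obtain ⟨F, hF, f, hf⟩ := finite_types q 1
  obtain ⟨E, hEd⟩ : ∃ E, E = 2 ^ (q + 1) := ⟨_, rfl⟩
  let R : (Σ m, SimpleGraph (Fin m) × (Fin 1 → Fin m)) → Prop := fun x =>
    C _ x.2.1 ∧ x.2.1.Connected ∧ ∃ u, (E : ℕ∞) < x.2.1.edist (x.2.2 0) u
  let T := {t : F // ∃ x, f x = t ∧ R x}
  have hT : ∀ t : T, ∃ x, f x = t.1 ∧ R x := fun t => t.2
  choose rep hrep1 hrep2 using hT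
  choose hrC hrconn ut hut using hrep2
  have : Finite (T × Fin (q + 1)) := inferInstance
  obtain ⟨_⟩ := nonempty_fintype (T × Fin (q + 1))
  obtain ⟨V, hV, M, r, p, p', x, h1, h2, h3, h4, h5, h6⟩ := model_step hIso hAdd hne q E
    (by rw [hEd]; exact Nat.pow_le_pow_right (by norm_num) (by omega))
    (ι := T × Fin (q + 1)) (fun i => Fin (rep i.1).1) (fun i => (rep i.1).2.1)
    (fun i => (rep i.1).2.2 0) (fun i => ut i.1) (fun i => hrC i.1) (fun i => hrconn i.1)
    (fun i => hut i.1) Finset.univ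
  refine ⟨V, hV, M, r, h1, h2, ?_⟩
  have key : ∀ (m₁ m₂ : ℕ) (J₁ : SimpleGraph (Fin m₁)) (J₂ : SimpleGraph (Fin m₂)),
        C _ J₁ → C _ J₂ → J₁.Connected → J₂.Connected → Appears M r J₁ → Appears M r J₂ →
        RichIn J₁ J₂ q := by
    intro m₁ m₂ J₁ J₂ c₁ c₂ k₁ k₂ a₁ a₂ c
    obtain ⟨g₁, hg₁⟩ := a₁.pendant
    obtain ⟨g₂, hg₂⟩ := a₂.pendant
    have hfar : ∃ u, (E : ℕ∞) < J₁.edist c u := by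
      by_contra hcon
      push Not at hcon
      have e1 := hcon (g₁ p)
      have e2 := hcon (g₁ p')
      rw [SimpleGraph.edist_comm] at e1
      have e3 := (h3.trans (hg₁.edist_le p p')).trans
        (J₁.edist_triangle (u := g₁ p) (v := c) (w := g₁ p'))
      have e4 := e3.trans (add_le_add e1 e2)
      have e5 : 2 * E + 1 ≤ E + E := by exact_mod_cast e4
      omega
    let t : T := ⟨f ⟨m₁, J₁, fun _ => c⟩, ⟨m₁, J₁, fun _ => c⟩, rfl, c₁, k₁, hfar⟩
    have hty := hf ⟨m₁, J₁, fun _ => c⟩ (rep t) (hrep1 t).symm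
    have hty' : LEq J₁ (rep t).2.1 q {(c, (rep t).2.2 0)} := by
      refine hty.subset ?_
      rintro _ rfl
      exact ⟨0, rfl⟩
    refine ⟨fun i => g₂ (x (t, i)), ?_, ?_⟩
    · intro i j hij
      rw [← hEd]
      refine (h5 (t, i) (Finset.mem_univ _) (t, j) (Finset.mem_univ _) ?_).trans_le
        (hg₂.edist_le _ _)
      intro h
      exact hij (Prod.ext_iff.1 h).2
    · intro i
      refine hty'.trans_single ((h6 (t, i) (Finset.mem_univ _)).trans_single (hg₂.lEq q _ ?_))
      refine lt_of_le_of_lt ?_ (h4 (t, i) (Finset.mem_univ _))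
      rw [hEd]
      exact_mod_cast Nat.pow_le_pow_right (by norm_num) (by omega)
  intro m₁ m₂ J₁ J₂ c₁ c₂ k₁ k₂ a₁ a₂ b H
  exact hq _ _ _ _ _ (EFG_sum (key _ _ _ _ c₁ c₂ k₁ k₂ a₁ a₂) (key _ _ _ _ c₂ c₁ k₂ k₁ a₂ a₁))


/-! ### Glueing -/

section
variable {A B V : Type}

def glueG (e : A ⊕ B ≃ V) (J : SimpleGraph A) (H : SimpleGraph B) : SimpleGraph V :=
  (J ⊕g H).comap e.symm

def glueIso (e : A ⊕ B ≃ V) (J : SimpleGraph A) (H : SimpleGraph B) : glueG e J H ≃g (J ⊕g H) :=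
  SimpleGraph.Iso.comap e.symm _

/-- `S` is the vertex set of a connected component of `G`. -/
def IsComp (G : SimpleGraph V) (S : Set V) : Prop :=
  S.Nonempty ∧ ∀ u ∈ S, ∀ v, G.Reachable u v ↔ v ∈ S

theorem IsComp.eq {G : SimpleGraph V} {S T : Set V} (hS : IsComp G S) (hT : IsComp G T)
    {u : V} (h1 : u ∈ S) (h2 : u ∈ T) : S = T := by
  ext v
  rw [← hS.2 u h1, ← hT.2 u h2]

theorem isComp_reach (G : SimpleGraph V) (u : V) : IsComp G {v | G.Reachable u v} := by
  refine ⟨⟨u, SimpleGraph.Reachable.refl _⟩, ?_⟩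
  intro w hw v
  exact ⟨fun h => SimpleGraph.Reachable.trans hw h, fun h => (SimpleGraph.Reachable.symm hw).trans h⟩

theorem glue_ll (e : A ⊕ B ≃ V) (J : SimpleGraph A) (H : SimpleGraph B) (a b : A) :
    (glueG e J H).Adj (e (Sum.inl a)) (e (Sum.inl b)) ↔ J.Adj a b := by simp [glueG]
theorem glue_rr (e : A ⊕ B ≃ V) (J : SimpleGraph A) (H : SimpleGraph B) (a b : B) :
    (glueG e J H).Adj (e (Sum.inr a)) (e (Sum.inr b)) ↔ H.Adj a b := by simp [glueG]
theorem glue_lr (e : A ⊕ B ≃ V) (J : SimpleGraph A) (H : SimpleGraph B) (a : A) (b : B) :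
    ¬ (glueG e J H).Adj (e (Sum.inl a)) (e (Sum.inr b)) := by simp [glueG]

theorem glue_isComp (e : A ⊕ B ≃ V) (J : SimpleGraph A) (H : SimpleGraph B) (hJ : J.Connected) :
    IsComp (glueG e J H) (Set.range (e ∘ Sum.inl)) := by
  let f : J ↪g glueG e J H := ⟨⟨fun a => e (Sum.inl a), fun a b h => by simpa using h⟩,
    fun {a b} => glue_ll e J H a b⟩
  obtain ⟨a₀⟩ := hJ.nonempty
  refine ⟨⟨_, ⟨a₀, rfl⟩⟩, ?_⟩
  rintro _ ⟨a, rfl⟩ v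
  constructor
  · intro h
    obtain ⟨y, hy, -⟩ := reach_closed f (by
      intro x b hb
      obtain ⟨z, rfl⟩ := e.surjective b
      rcases z with z | z
      · exact ⟨z, rfl⟩
      · exact absurd hb (glue_lr e J H x z)) a v h
    exact ⟨y, hy⟩
  · rintro ⟨b, rfl⟩
    exact (hJ.preconnected a b).map f.toHom

theorem glue_of_isComp (e : A ⊕ B ≃ V) (G : SimpleGraph V)
    (h : IsComp G (Set.range (e ∘ Sum.inl))) :
    (G.comap (e ∘ Sum.inl)).Connected ∧
      G = glueG e (G.comap (e ∘ Sum.inl)) (G.comap (e ∘ Sum.inr)) := by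
  have hno : ∀ a b, ¬ G.Adj (e (Sum.inl a)) (e (Sum.inr b)) := by
    intro a b hab
    obtain ⟨c, hc⟩ := (h.2 _ ⟨a, rfl⟩ _).1 hab.reachable
    simp at hc
  have heq : G = glueG e (G.comap (e ∘ Sum.inl)) (G.comap (e ∘ Sum.inr)) := by
    ext x y
    obtain ⟨x, rfl⟩ := e.surjective x
    obtain ⟨y, rfl⟩ := e.surjective y
    rcases x with x | x <;> rcases y with y | y
    · rw [glue_ll]; rfl
    · exact ⟨fun h => absurd h (hno _ _), fun h => absurd h (glue_lr _ _ _ _ _)⟩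
    · exact ⟨fun h => absurd h.symm (hno _ _), fun h => absurd h.symm (glue_lr _ _ _ _ _)⟩
    · rw [glue_rr]; rfl
  refine ⟨?_, heq⟩
  obtain ⟨_, a₀, rfl⟩ := h.1
  rw [SimpleGraph.connected_iff]
  refine ⟨fun a b => ?_, ⟨a₀⟩⟩
  let f : G.comap (e ∘ Sum.inl) ↪g G := ⟨⟨fun a => e (Sum.inl a), fun a b h => by simpa using h⟩,
    Iff.rfl⟩
  obtain ⟨y, hy, hr⟩ := reach_closed f (by
      intro x b hb
      obtain ⟨z, rfl⟩ := e.surjective b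
      rcases z with z | z
      · exact ⟨z, rfl⟩
      · exact absurd hb (hno x z)) a (e (Sum.inl b)) ((h.2 _ ⟨a, rfl⟩ _).2 ⟨b, rfl⟩)
  rwa [f.injective hy] at hr

theorem glue_class {C : GraphClassOn} (hIso : ClassIsoInvariant C) (hD : ClassDecomposable C)
    [Finite A] [Finite B] [Finite V] (e : A ⊕ B ≃ V) (J : SimpleGraph A) (H : SimpleGraph B) :
    C V (glueG e J H) ↔ C A J ∧ C B H := by
  rw [← class_sum hIso hD]
  exact hIso _ _ _ _ ⟨glueIso e J H⟩

theorem card_core {C : GraphClassOn} (hIso : ClassIsoInvariant C) (hD : ClassDecomposable C)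
    [Finite A] [Finite B] [Finite V] (e : A ⊕ B ≃ V) (Q : SimpleGraph V → Prop) :
    Nat.card {G : SimpleGraph V // (C V G ∧ IsComp G (Set.range (e ∘ Sum.inl))) ∧ Q G} =
    Nat.card {p : SimpleGraph A × SimpleGraph B //
      ((C A p.1 ∧ p.1.Connected) ∧ C B p.2) ∧ Q (glueG e p.1 p.2)} := by
  symm
  apply Nat.card_eq_of_bijective (fun p => ⟨glueG e p.1.1 p.1.2,
    ⟨(glue_class hIso hD e _ _).2 ⟨p.2.1.1.1, p.2.1.2⟩, glue_isComp e _ _ p.2.1.1.2⟩, p.2.2⟩)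
  constructor
  · rintro ⟨⟨J, H⟩, h⟩ ⟨⟨J', H'⟩, h'⟩ heq
    have h0 : glueG e J H = glueG e J' H' := Subtype.ext_iff.1 heq
    have h1 : J = J' := by
      ext a b
      rw [← glue_ll e J H, h0, glue_ll]
    have h2 : H = H' := by
      ext a b
      rw [← glue_rr e J H, h0, glue_rr]
    subst h1 h2
    rfl
  · rintro ⟨G, ⟨hC, hS⟩, hQ⟩
    obtain ⟨hc, hg⟩ := glue_of_isComp e G hS
    rw [hg] at hC hQ
    rw [glue_class hIso hD] at hC
    exact ⟨⟨(_, _), ⟨⟨hC.1, hc⟩, hC.2⟩, hQ⟩, Subtype.ext hg.symm⟩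

theorem exists_split [Finite A] [Finite B] [Finite V] (S : Set V) (h1 : Nat.card A = Nat.card S)
    (h2 : Nat.card A + Nat.card B = Nat.card V) :
    ∃ e : A ⊕ B ≃ V, Set.range (e ∘ Sum.inl) = S := by
  classical
  have h3 : Nat.card S + Nat.card (Sᶜ : Set V) = Nat.card V := by
    rw [← Nat.card_sum]
    exact Nat.card_congr (Equiv.Set.sumCompl S)
  have e1 : Nonempty (A ≃ S) := Finite.card_eq.1 h1
  have e2 : Nonempty (B ≃ (Sᶜ : Set V)) := Finite.card_eq.1 (by omega)
  obtain ⟨e1⟩ := e1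
  obtain ⟨e2⟩ := e2
  refine ⟨(Equiv.sumCongr e1 e2).trans (Equiv.Set.sumCompl S), ?_⟩
  ext v
  constructor
  · rintro ⟨a, rfl⟩
    simp
  · intro hv
    exact ⟨e1.symm ⟨v, hv⟩, by simp⟩

end

/-! ### Bridges -/

theorem card_bridges {V : Type} [Finite V] (G : SimpleGraph V) :
    Nat.card {p : V × V // G.Adj p.1 p.2 ∧ G.IsBridge s(p.1, p.2)} ≤ 2 * (Nat.card V - 1) := by
  classical
  obtain ⟨_⟩ := nonempty_fintype V
  rcases isEmpty_or_nonempty V with hV | hV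
  · have : IsEmpty {p : V × V // G.Adj p.1 p.2 ∧ G.IsBridge s(p.1, p.2)} :=
      ⟨fun p => hV.elim p.1.1⟩
    simp
  let B : SimpleGraph V := ⟨fun u v => G.Adj u v ∧ G.IsBridge s(u, v),
    ⟨fun u v h => ⟨h.1.symm, by rw [Sym2.eq_swap]; exact h.2⟩⟩, ⟨fun u h => G.loopless.irrefl u h.1⟩⟩
  have hBG : B ≤ G := fun u v h => h.1
  have hB : B.IsAcyclic := by
    rw [SimpleGraph.isAcyclic_iff_forall_adj_isBridge]
    intro v w h
    exact SimpleGraph.IsBridge.anti hBG h.2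
  obtain ⟨F, hF, -, hT⟩ := (SimpleGraph.connected_top (V := V)).exists_isTree_le_of_le_of_isAcyclic
    le_top hB
  have hc := hT.card_edgeFinset
  have hd := F.dart_card_eq_twice_card_edges
  have hinj : Nat.card {p : V × V // G.Adj p.1 p.2 ∧ G.IsBridge s(p.1, p.2)} ≤ Nat.card F.Dart := by
    refine Nat.card_le_card_of_injective (fun p => ⟨p.1, hF p.2⟩) ?_
    intro p q h
    exact Subtype.ext (congrArg SimpleGraph.Dart.toProd h)
  rw [Nat.card_eq_fintype_card (α := F.Dart), hd] at hinj
  rw [Nat.card_eq_fintype_card (α := V)]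
  omega

theorem adj_sup_edge {V : Type} {G : SimpleGraph V} {u v : V} (h : u ≠ v) (a b : V) :
    (G ⊔ SimpleGraph.fromEdgeSet {s(u, v)}).Adj a b ↔ G.Adj a b ∨ s(a, b) = s(u, v) := by
  rw [SimpleGraph.sup_adj, SimpleGraph.fromEdgeSet_adj, Set.mem_singleton_iff]
  constructor
  · rintro (h | h)
    · exact Or.inl h
    · exact Or.inr h.1
  · rintro (h' | h')
    · exact Or.inl h'
    · refine Or.inr ⟨h', ?_⟩
      rintro rfl
      rw [Sym2.eq_iff] at h'
      rcases h' with h' | h' <;> exact h (by rw [← h'.1, ← h'.2])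

/-- The bridge-counting inequality. -/
theorem card_add_bridge {V : Type} [Finite V] (P Q : SimpleGraph V → Prop)
    (X : SimpleGraph V → V → V → Prop) (hX : ∀ G u v, X G u v → ¬ G.Reachable u v)
    (hPQ : ∀ G u v, P G → X G u v → Q (G ⊔ SimpleGraph.fromEdgeSet {s(u, v)})) :
    Nat.card {x : SimpleGraph V × V × V // P x.1 ∧ X x.1 x.2.1 x.2.2} ≤
      2 * (Nat.card V - 1) * Nat.card {G : SimpleGraph V // Q G} := by
  classical
  have hne : ∀ {G : SimpleGraph V} {u v}, X G u v → u ≠ v := by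
    rintro G u v h rfl
    exact hX G u u h (SimpleGraph.Reachable.refl _)
  obtain ⟨_⟩ := nonempty_fintype {G : SimpleGraph V // Q G}
  let Z := Σ G : {G : SimpleGraph V // Q G},
    {p : V × V // G.1.Adj p.1 p.2 ∧ G.1.IsBridge s(p.1, p.2)}
  have h1 : Nat.card Z ≤ 2 * (Nat.card V - 1) * Nat.card {G : SimpleGraph V // Q G} := by
    rw [Nat.card_sigma, mul_comm, Nat.card_eq_fintype_card, ← smul_eq_mul]
    exact Finset.sum_le_card_nsmul _ _ _ (fun G _ => card_bridges G.1)
  refine le_trans (Nat.card_le_card_of_injective (β := Z)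
    (fun x => ⟨⟨x.1.1 ⊔ SimpleGraph.fromEdgeSet {s(x.1.2.1, x.1.2.2)}, hPQ _ _ _ x.2.1 x.2.2⟩,
      ⟨x.1.2, ?_, ?_⟩⟩) ?_) h1
  · rw [adj_sup_edge (hne x.2.2)]
    exact Or.inr rfl
  · have := SimpleGraph.isBridge_sup_edge (G := x.1.1) (u := x.1.2.1) (v := x.1.2.2)
    exact this.2 (SimpleGraph.IsBridge.of_not_reachable (hX _ _ _ x.2.2))
  · rintro ⟨⟨G, u, v⟩, hP, hx⟩ ⟨⟨G', u', v'⟩, hP', hx'⟩ h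
    have h3 : (u, v) = (u', v') := congrArg (fun z : Z => z.2.1) h
    have h1 := congrArg (fun z : Z => z.1.1) h
    obtain ⟨rfl, rfl⟩ := Prod.ext_iff.1 h3
    have h4 : G = G' := by
      simp only at hx hx' h1
      ext a b
      have h5 : (G ⊔ SimpleGraph.fromEdgeSet {s(u, v)}).Adj a b ↔
        (G' ⊔ SimpleGraph.fromEdgeSet {s(u, v)}).Adj a b := by rw [h1]
      rw [adj_sup_edge (hne hx), adj_sup_edge (hne hx)] at h5
      have aux : ∀ {G : SimpleGraph V}, X G u v → s(a, b) = s(u, v) → ¬ G.Adj a b := by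
        intro G hG hs hab
        rw [← SimpleGraph.mem_edgeSet, hs, SimpleGraph.mem_edgeSet] at hab
        exact hX _ _ _ hG hab.reachable
      have a1 := aux hx
      have a2 := aux hx'
      tauto
    subst h4
    rfl


noncomputable def connCount (C : GraphClassOn) (n : ℕ) : ℕ :=
  Nat.card {G : SimpleGraph (Fin n) // C (Fin n) G ∧ G.Connected}

/-- Number of pairs (connected graph of size `n - h`, graph of size `h`) such that
the disjoint union satisfies `Q`. -/
noncomputable def pairCount (C : GraphClassOn) (Q : ∀ {V : Type}, SimpleGraph V → Prop)
    (n h : ℕ) : ℕ :=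
  Nat.card {p : SimpleGraph (Fin (n - h)) × SimpleGraph (Fin h) //
    ((C _ p.1 ∧ p.1.Connected) ∧ C _ p.2) ∧ Q (p.1 ⊕g p.2)}

section
variable {C : GraphClassOn}

theorem sum_finset_card (n : ℕ) (g : ℕ → ℕ) :
    ∑ S : Finset (Fin n), g S.card = ∑ j ∈ Finset.range (n + 1), n.choose j * g j := by
  have := Finset.sum_powerset_apply_card g (x := (Finset.univ : Finset (Fin n)))
  simpa using this

theorem split_fin {n : ℕ} (S : Finset (Fin n)) :
    ∃ e : Fin S.card ⊕ Fin (n - S.card) ≃ Fin n, Set.range (e ∘ Sum.inl) = (S : Set (Fin n)) := by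
  have hS : S.card ≤ n := by simpa using S.card_le_univ
  apply exists_split
  · simp
  · simp; omega

theorem card_comp (hIso : ClassIsoInvariant C) (hD : ClassDecomposable C) {n : ℕ}
    (S : Finset (Fin n)) :
    Nat.card {G : SimpleGraph (Fin n) // C _ G ∧ IsComp G S} =
      connCount C S.card * classCount C (n - S.card) := by
  obtain ⟨e, he⟩ := split_fin S
  have := card_core hIso hD e (fun _ => True)
  simp only [and_true] at this
  rw [← he, this, connCount, classCount, ← Nat.card_prod]
  refine Nat.card_congr (Equiv.subtypeProdEquivProd (p := fun G => C _ G ∧ G.Connected)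
    (q := fun G => C _ G))

theorem card_comp_comp (hIso : ClassIsoInvariant C) (hD : ClassDecomposable C) {n : ℕ}
    (S : Finset (Fin n)) :
    connCount C S.card * connCount C (n - S.card) ≤
    Nat.card {G : SimpleGraph (Fin n) // (C _ G ∧ IsComp G S) ∧ IsComp G (S : Set (Fin n))ᶜ} := by
  obtain ⟨e, he⟩ := split_fin S
  have := card_core hIso hD e (fun G => IsComp G (S : Set (Fin n))ᶜ)
  rw [he] at this
  rw [this, connCount, connCount, ← Nat.card_prod]
  refine Nat.card_le_card_of_injective (fun p => ⟨(p.1.1, p.2.1), ⟨p.1.2, p.2.2.1⟩, ?_⟩) ?_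
  · have h1 := glue_isComp ((Equiv.sumComm _ _).trans e) p.2.1 p.1.1 p.2.2.2
    have h2 : glueG ((Equiv.sumComm _ _).trans e) p.2.1 p.1.1 = glueG e p.1.1 p.2.1 := by
      ext x y
      obtain ⟨x, rfl⟩ := e.surjective x
      obtain ⟨y, rfl⟩ := e.surjective y
      rcases x with x | x <;> rcases y with y | y <;> simp [glueG]
    have h3 : Set.range (((Equiv.sumComm _ _).trans e) ∘ Sum.inl) = (S : Set (Fin n))ᶜ := by
      rw [← he]
      ext x
      obtain ⟨x, rfl⟩ := e.surjective x
      rcases x with x | x <;> simp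
    rw [h2, h3] at h1
    exact h1
  · rintro ⟨⟨a, _⟩, ⟨b, _⟩⟩ ⟨⟨a', _⟩, ⟨b', _⟩⟩ h
    simp only [Subtype.mk.injEq, Prod.mk.injEq] at h ⊢
    exact h

theorem count_one (hIso : ClassIsoInvariant C) (hD : ClassDecomposable C) (n : ℕ) :
    n * classCount C n =
      ∑ j ∈ Finset.range (n + 1), n.choose j * (j * connCount C j * classCount C (n - j)) := by
  classical
  rw [← sum_finset_card n (fun j => j * connCount C j * classCount C (n - j))]
  have h1 : Nat.card (Σ S : Finset (Fin n), {G : SimpleGraph (Fin n) // C _ G ∧ IsComp G S} × S) =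
      ∑ S : Finset (Fin n), S.card * connCount C S.card * classCount C (n - S.card) := by
    rw [Nat.card_sigma]
    refine Finset.sum_congr rfl fun S _ => ?_
    rw [Nat.card_prod, card_comp hIso hD]
    simp
    ring
  rw [← h1]
  have h2 : n * classCount C n =
      Nat.card ({G : SimpleGraph (Fin n) // C _ G} × Fin n) := by
    rw [Nat.card_prod]
    simp [classCount, mul_comm]
  rw [h2]
  symm
  apply Nat.card_eq_of_bijective (fun x => (⟨x.2.1.1, x.2.1.2.1⟩, x.2.2.1))
  constructor
  · rintro ⟨S, ⟨G, hG⟩, ⟨v, hv⟩⟩ ⟨S', ⟨G', hG'⟩, ⟨v', hv'⟩⟩ h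
    simp only [Prod.mk.injEq, Subtype.mk.injEq] at h
    obtain ⟨rfl, rfl⟩ := h
    have := hG.2.eq hG'.2 (u := v) hv hv'
    have : S = S' := by exact_mod_cast this
    subst this
    rfl
  · rintro ⟨⟨G, hG⟩, v⟩
    exact ⟨⟨Finset.univ.filter (fun w => G.Reachable v w),
      ⟨G, hG, by simpa using isComp_reach G v⟩, ⟨v, by simp⟩⟩, rfl⟩

theorem count_two (hIso : ClassIsoInvariant C) (hAdd : ClassAddable C) (n : ℕ) :
    ∑ j ∈ Finset.range (n + 1), n.choose j *
      (j * connCount C j * ((n - j : ℕ) * connCount C (n - j))) ≤ 2 * (n - 1) * connCount C n := by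
  classical
  rw [← sum_finset_card n (fun j => j * connCount C j * ((n - j : ℕ) * connCount C (n - j)))]
  have h0 := card_add_bridge (V := Fin n) (fun G => C _ G) (fun G => C _ G ∧ G.Connected)
    (fun G u v => ∃ S : Finset (Fin n), IsComp G S ∧ IsComp G (S : Set (Fin n))ᶜ ∧ u ∈ S ∧ v ∉ S)
    (by
      rintro G u v ⟨S, h1, h2, h3, h4⟩ h5
      exact h4 ((h1.2 u h3 v).1 h5))
    (by
      rintro G u v hG ⟨S, h1, h2, h3, h4⟩
      have hnr : ¬ G.Reachable u v := fun h5 => h4 ((h1.2 u h3 v).1 h5)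
      refine ⟨hAdd.2 _ _ _ _ hG hnr, ?_⟩
      have huv : (G ⊔ SimpleGraph.fromEdgeSet {s(u, v)}).Adj u v :=
        (adj_sup_edge (by rintro rfl; exact h4 h3) u v).2 (Or.inr rfl)
      have : ∀ x, (G ⊔ SimpleGraph.fromEdgeSet {s(u, v)}).Reachable u x := by
        intro x
        by_cases hx : x ∈ S
        · exact ((h1.2 u h3 x).2 hx).mono le_sup_left
        · exact huv.reachable.trans (((h2.2 v h4 x).2 hx).mono le_sup_left)
      rw [SimpleGraph.connected_iff]
      exact ⟨fun x y => (this x).symm.trans (this y), ⟨u⟩⟩)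
  simp only [Nat.card_eq_fintype_card (α := Fin n), Fintype.card_fin] at h0
  refine le_trans ?_ h0
  calc _ ≤ Nat.card (Σ S : Finset (Fin n), {G : SimpleGraph (Fin n) //
        (C _ G ∧ IsComp G S) ∧ IsComp G (S : Set (Fin n))ᶜ} × S × (Sᶜ : Finset (Fin n))) := by
        rw [Nat.card_sigma]
        refine Finset.sum_le_sum fun S _ => ?_
        rw [Nat.card_prod, Nat.card_prod]
        have h1 := card_comp_comp hIso hAdd.1 S
        have h2 : Nat.card (Sᶜ : Finset (Fin n)) = n - S.card := by
          rw [Nat.card_eq_fintype_card, Fintype.card_coe, Finset.card_compl, Fintype.card_fin]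
        have h3 : Nat.card S = S.card := by simp
        rw [h2, h3]
        calc _ = (connCount C S.card * connCount C (n - S.card)) * (S.card * (n - S.card)) := by ring
          _ ≤ _ := Nat.mul_le_mul_right _ h1
    _ ≤ _ := by
        refine Nat.card_le_card_of_injective (fun x => ⟨(x.2.1.1, x.2.2.1.1, x.2.2.2.1),
          x.2.1.2.1.1, x.1, x.2.1.2.1.2, x.2.1.2.2, x.2.2.1.2, Finset.mem_compl.1 x.2.2.2.2⟩) ?_
        rintro ⟨S, ⟨G, hG⟩, ⟨v, hv⟩, ⟨w, hw⟩⟩ ⟨S', ⟨G', hG'⟩, ⟨v', hv'⟩, ⟨w', hw'⟩⟩ h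
        simp only [Prod.mk.injEq, Subtype.mk.injEq] at h
        obtain ⟨rfl, rfl, rfl⟩ := h
        have := hG.1.2.eq hG'.1.2 (u := v) hv hv'
        have : S = S' := by exact_mod_cast this
        subst this
        rfl

theorem card_unreach (hAdd : ClassAddable C) (n : ℕ) :
    Nat.card {x : SimpleGraph (Fin n) × Fin n × Fin n // C _ x.1 ∧ ¬ x.1.Reachable x.2.1 x.2.2} ≤
      2 * (n - 1) * classCount C n := by
  have := card_add_bridge (V := Fin n) (fun G => C _ G) (fun G => C _ G)
    (fun G u v => ¬ G.Reachable u v) (fun _ _ _ h => h)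
    (fun G u v h1 h2 => hAdd.2 _ _ _ _ h1 h2)
  simpa [classCount] using this

theorem connCount_one
    (hne : ∀ n : ℕ, 1 ≤ n → ∃ G : SimpleGraph (Fin n), C (Fin n) G) : connCount C 1 = 1 := by
  rw [connCount, Nat.card_eq_one_iff_unique]
  obtain ⟨G, hG⟩ := hne 1 le_rfl
  refine ⟨inferInstance, ⟨G, hG, ?_⟩⟩
  rw [SimpleGraph.connected_iff]
  exact ⟨fun a b => by rw [Subsingleton.elim a b], inferInstance⟩

theorem connCount_zero : connCount C 0 = 0 := by
  rw [connCount, Nat.card_eq_zero]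
  left
  exact ⟨fun G => G.2.2.nonempty.elim fun x => x.elim0⟩

theorem connCount_le (n : ℕ) : connCount C n ≤ classCount C n :=
  Nat.card_le_card_of_injective (fun G => ⟨G.1, G.2.1⟩)
    (fun a b h => Subtype.ext (by simpa using h))

theorem classCount_pos (hD : ClassDecomposable C)
    (hne : ∀ n : ℕ, 1 ≤ n → ∃ G : SimpleGraph (Fin n), C (Fin n) G) (n : ℕ) :
    0 < classCount C n := by
  rw [classCount, Nat.card_pos_iff]
  refine ⟨?_, inferInstance⟩
  rcases Nat.eq_zero_or_pos n with rfl | h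
  · refine ⟨⊥, ?_⟩
    rw [hD]
    intro c
    induction c using SimpleGraph.ConnectedComponent.ind with
    | h v => exact v.elim0
  · obtain ⟨G, hG⟩ := hne n h
    exact ⟨⟨G, hG⟩⟩

/-- growth -/
theorem count_growth (hIso : ClassIsoInvariant C) (hAdd : ClassAddable C)
    (hne : ∀ n : ℕ, 1 ≤ n → ∃ G : SimpleGraph (Fin n), C (Fin n) G) (n : ℕ) (hn : 2 ≤ n) :
    n * classCount C (n - 1) ≤ 2 * classCount C n := by
  classical
  have h0 := card_unreach hAdd n
  have h1 : n * (classCount C (n - 1) * (n - 1)) ≤ 2 * (n - 1) * classCount C n := by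
    refine le_trans ?_ h0
    calc n * (classCount C (n - 1) * (n - 1)) = Nat.card (Σ u : Fin n,
          {G : SimpleGraph (Fin n) // C _ G ∧ IsComp G ({u} : Finset (Fin n))} ×
            (({u} : Finset (Fin n))ᶜ : Finset (Fin n))) := by
          rw [Nat.card_sigma]
          have : ∀ u : Fin n, Nat.card (({G : SimpleGraph (Fin n) //
              C _ G ∧ IsComp G ({u} : Finset (Fin n))} ×
            (({u} : Finset (Fin n))ᶜ : Finset (Fin n)))) = classCount C (n - 1) * (n - 1) := by
            intro u
            rw [Nat.card_prod, card_comp hIso hAdd.1, Finset.card_singleton,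
              connCount_one hne, one_mul, Nat.card_eq_fintype_card, Fintype.card_coe,
              Finset.card_compl, Fintype.card_fin, Finset.card_singleton]
          simp only [this]
          simp
      _ ≤ _ := by
        refine Nat.card_le_card_of_injective (fun x => ⟨(x.2.1.1, x.1, x.2.2.1),
          x.2.1.2.1, ?_⟩) ?_
        · intro h
          have := (x.2.1.2.2.2 x.1 (by simp) x.2.2.1).1 h
          exact Finset.mem_compl.1 x.2.2.2 (by exact_mod_cast this)
        · rintro ⟨u, ⟨G, hG⟩, ⟨v, hv⟩⟩ ⟨u', ⟨G', hG'⟩, ⟨v', hv'⟩⟩ h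
          simp only [Prod.mk.injEq, Subtype.mk.injEq] at h
          obtain ⟨rfl, rfl, rfl⟩ := h
          rfl
  have h2 : 0 < n - 1 := by omega
  refine Nat.le_of_mul_le_mul_right ?_ h2
  calc _ = n * (classCount C (n - 1) * (n - 1)) := by ring
    _ ≤ _ := h1
    _ = _ := by ring

theorem count_tail (hAdd : ClassAddable C) (n m : ℕ) (hn : 1 ≤ n) :
    (m + 1) * Nat.card {G : SimpleGraph (Fin n) // C _ G ∧
      ¬ ∃ T : Finset (Fin n), T.card ≤ m ∧ IsComp G (T : Set (Fin n))ᶜ} ≤ 2 * classCount C n := by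
  classical
  obtain ⟨X, hX⟩ : ∃ X : SimpleGraph (Fin n) → Prop, X = fun G => C _ G ∧
      ¬ ∃ T : Finset (Fin n), T.card ≤ m ∧ IsComp G (T : Set (Fin n))ᶜ := ⟨_, rfl⟩
  have h0 := card_unreach hAdd n
  have h1 : Nat.card {G // X G} * (n * (m + 1)) ≤ 2 * (n - 1) * classCount C n := by
    refine le_trans ?_ h0
    obtain ⟨_⟩ := nonempty_fintype {G // X G}
    calc Nat.card {G // X G} * (n * (m + 1)) ≤ Nat.card (Σ x : {G // X G} × Fin n,
          {v // ¬ x.1.1.Reachable x.2 v}) := by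
          rw [Nat.card_sigma]
          have : Nat.card {G // X G} * (n * (m + 1)) =
              (Finset.univ : Finset ({G // X G} × Fin n)).card • (m + 1) := by
            rw [Finset.card_univ, Fintype.card_prod, Fintype.card_fin, Nat.card_eq_fintype_card,
              smul_eq_mul, mul_assoc]
          rw [this]
          refine Finset.card_nsmul_le_sum _ _ _ ?_
          rintro ⟨⟨G, hG⟩, u⟩ -
          by_contra hcon
          rw [hX] at hG
          apply hG.2
          refine ⟨Finset.univ.filter (fun v => ¬ G.Reachable u v), ?_, ?_⟩
          · rw [Nat.card_eq_fintype_card, Fintype.card_subtype] at hcon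
            simp only at hcon ⊢
            omega
          · have := isComp_reach G u
            convert this using 1
            ext v
            simp
      _ ≤ _ := by
        refine Nat.card_le_card_of_injective (fun x => ⟨(x.1.1.1, x.1.2, x.2.1), ?_, x.2.2⟩) ?_
        · have : ∀ G, X G → C _ G := by
            intro G hG
            rw [hX] at hG
            exact hG.1
          exact this _ x.1.1.2
        · rintro ⟨⟨⟨G, hG⟩, u⟩, ⟨v, hv⟩⟩ ⟨⟨⟨G', hG'⟩, u'⟩, ⟨v', hv'⟩⟩ h
          simp only [Prod.mk.injEq, Subtype.mk.injEq] at h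
          obtain ⟨rfl, rfl, rfl⟩ := h
          rfl
  rw [hX] at h1
  refine Nat.le_of_mul_le_mul_right ?_ (show 0 < n by omega)
  calc _ = Nat.card {G : SimpleGraph (Fin n) // C _ G ∧
      ¬ ∃ T : Finset (Fin n), T.card ≤ m ∧ IsComp G (T : Set (Fin n))ᶜ} * (n * (m + 1)) := by ring
    _ ≤ _ := h1
    _ ≤ 2 * n * classCount C n := by gcongr; omega
    _ = _ := by ring

theorem count_main (hIso : ClassIsoInvariant C) (hD : ClassDecomposable C)
    (Q : ∀ {V : Type}, SimpleGraph V → Prop)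
    (hQ : ∀ {V W : Type} {G : SimpleGraph V} {H : SimpleGraph W}, (G ≃g H) → (Q G ↔ Q H))
    (n m : ℕ) (hn : 2 * m < n) :
    Nat.card {G : SimpleGraph (Fin n) // (C _ G ∧ Q G) ∧
      ∃ T : Finset (Fin n), T.card ≤ m ∧ IsComp G (T : Set (Fin n))ᶜ} =
    ∑ h ∈ Finset.range (m + 1), n.choose h * pairCount C Q n h := by
  classical
  have hcomp : ∀ T : Finset (Fin n),
      Nat.card {G : SimpleGraph (Fin n) // (C _ G ∧ IsComp G (T : Set (Fin n))ᶜ) ∧ Q G} =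
        pairCount C Q n T.card := by
    intro T
    obtain ⟨e, he⟩ := exists_split (A := Fin (n - T.card)) (B := Fin T.card) (V := Fin n)
      ((T : Set (Fin n))ᶜ) (by
        have : Nat.card ((T : Set (Fin n))ᶜ : Set (Fin n)) = n - T.card := by
          rw [← Finset.coe_compl, Nat.card_coe_set_eq, Set.ncard_coe_finset, Finset.card_compl,
            Fintype.card_fin]
        rw [this, Nat.card_eq_fintype_card, Fintype.card_fin])
        (by have : T.card ≤ n := by simpa using T.card_le_univ
            simp; omega)
    have := card_core hIso hD e (fun G => Q G)
    rw [he] at this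
    rw [this, pairCount]
    refine Nat.card_congr (Equiv.subtypeEquivRight fun p => ?_)
    rw [hQ (glueIso e p.1 p.2)]
  have h1 : Nat.card {G : SimpleGraph (Fin n) // (C _ G ∧ Q G) ∧
      ∃ T : Finset (Fin n), T.card ≤ m ∧ IsComp G (T : Set (Fin n))ᶜ} =
      Nat.card (Σ T : {T : Finset (Fin n) // T.card ≤ m},
        {G : SimpleGraph (Fin n) // (C _ G ∧ IsComp G (T.1 : Set (Fin n))ᶜ) ∧ Q G}) := by
    symm
    apply Nat.card_eq_of_bijective (fun x => ⟨x.2.1, ⟨x.2.2.1.1, x.2.2.2⟩, x.1.1, x.1.2,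
      x.2.2.1.2⟩)
    constructor
    · rintro ⟨⟨T, hT⟩, ⟨G, hG⟩⟩ ⟨⟨T', hT'⟩, ⟨G', hG'⟩⟩ h
      simp only [Subtype.mk.injEq] at h
      subst h
      have : ∃ u, u ∉ T ∪ T' := by
        by_contra hcon
        push Not at hcon
        have h1 : (T ∪ T').card = n := by
          rw [Finset.eq_univ_iff_forall.2 hcon]; simp
        have h2 := Finset.card_union_le T T'
        omega
      obtain ⟨u, hu⟩ := this
      simp only [Finset.mem_union, not_or] at hu
      have := hG.1.2.eq hG'.1.2 (u := u) (by simpa using hu.1) (by simpa using hu.2)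
      have : T = T' := by
        have := compl_injective this
        exact_mod_cast this
      subst this
      rfl
    · rintro ⟨G, hG, T, hT, hc⟩
      exact ⟨⟨⟨T, hT⟩, ⟨G, ⟨hG.1, hc⟩, hG.2⟩⟩, rfl⟩
  rw [h1, Nat.card_sigma]
  simp only [hcomp]
  rw [← Finset.sum_subtype (Finset.univ.filter (fun T : Finset (Fin n) => T.card ≤ m)) (by simp)
    (fun T => pairCount C Q n T.card), Finset.sum_filter,
    sum_finset_card n (fun j => if j ≤ m then pairCount C Q n j else 0)]
  have hsub : Finset.range (m + 1) ⊆ Finset.range (n + 1) := by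
    intro x hx
    simp only [Finset.mem_range] at hx ⊢
    omega
  rw [← Finset.sum_subset hsub]
  · refine Finset.sum_congr rfl fun h hh => ?_
    rw [if_pos (by simp at hh; omega)]
  · intro x _ hx
    rw [if_neg (by simp at hx; omega)]
    simp

end


section
variable {A B V : Type} {M : SimpleGraph A} {r : A} {G : SimpleGraph V}

/-- `f` is a pendant copy of `(M, r)`, attached by the single edge from `f r` to `v`. -/
def PCopy (r : A) (f : M ↪g G) (v : V) : Prop :=
  v ∉ Set.range f ∧ ∀ x b, b ∉ Set.range f → (G.Adj (f x) b ↔ x = r ∧ b = v)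

theorem PCopy.appears {f : M ↪g G} {v : V} (h : PCopy r f v) : Appears M r G := by
  have hinj := f.injective
  let E : M ≃g G.induce (Set.range f) := ⟨Equiv.ofInjective f hinj, f.map_adj_iff⟩
  refine ⟨Set.range f, f r, ⟨r, rfl⟩, E.symm, ?_, ?_, v, ⟨h.1, ?_⟩, ?_⟩
  · rw [RelIso.symm_apply_eq]
    rfl
  · rintro _ ⟨x, rfl⟩ b hb hadj
    rw [((h.2 x b hb).1 hadj).1]
  · exact (h.2 r v h.1).2 ⟨rfl, rfl⟩
  · rintro b ⟨hb, hadj⟩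
    exact ((h.2 r b hb).1 hadj).2

theorem conn_induct (hM : M.Connected) (T : Set A) (x₀ : A) (h0 : x₀ ∈ T)
    (hs : ∀ x y, x ∈ T → M.Adj x y → y ∈ T) (x : A) : x ∈ T := by
  obtain ⟨p⟩ := hM.preconnected x₀ x
  induction p with
  | nil => exact h0
  | cons h p ih => exact ih (hs _ _ h0 h)

theorem PCopy.range_subset (hM : M.Connected) {f f' : M ↪g G} {v : V} (h : PCopy r f v)
    (h' : PCopy r f' v) (hr : f r = f' r) : Set.range f ⊆ Set.range f' := by
  rintro _ ⟨x, rfl⟩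
  refine conn_induct hM (f ⁻¹' Set.range f') r ⟨r, hr.symm⟩ ?_ x
  rintro x y ⟨z, hz⟩ hxy
  by_contra hy
  have h1 : G.Adj (f' z) (f y) := by
    rw [hz]; exact f.map_adj_iff.2 hxy
  exact h.1 ⟨y, ((h'.2 z (f y) hy).1 h1).2⟩

def copySets (r : A) (M : SimpleGraph A) (B : Type) (G : SimpleGraph V) : Set (Set V) :=
  {S | ∃ (f : M ↪g G) (v : V), PCopy r f v ∧ Set.range f = S ∧
    ∃ (H : SimpleGraph B) (g : H ↪g G), Set.range g = Sᶜ ∧ ¬ Appears M r H}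

theorem card_copySets [Finite A] [Finite V] (hM : M.Connected) (hG : G.Connected)
    (hV : 2 * Nat.card A < Nat.card V) :
    (copySets r M B G).ncard ≤ Nat.card A * Nat.card A + 1 := by
  classical
  rcases (copySets r M B G).eq_empty_or_nonempty with h | ⟨S₀, hS₀⟩
  · rw [h]; simp
  obtain ⟨f₀, v₀, hp₀, hr₀, H, g, hg, hna⟩ := id hS₀
  have hcardR : ∀ f : M ↪g G, (Set.range f).ncard = Nat.card A := fun f => by
    rw [← Nat.card_coe_set_eq]
    exact (Nat.card_congr (Equiv.ofInjective f f.injective)).symm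
  -- the key claim
  have key : ∀ (f : M ↪g G) (v : V), PCopy r f v → Set.range f ≠ Set.range f₀ →
      f r ∈ Set.range f₀ ∧ v ∈ Set.range f₀ := by
    intro f v hp hne
    by_cases hdis : ∃ z, z ∈ Set.range f ∧ z ∈ Set.range f₀
    · obtain ⟨_, hz, ⟨z, rfl⟩⟩ := hdis
      have hns : ¬ Set.range f₀ ⊆ Set.range f := by
        intro hsub
        apply hne
        symm
        apply Set.eq_of_subset_of_ncard_le hsub
        rw [hcardR, hcardR]
      by_contra hcon
      apply hns
      rintro _ ⟨x, rfl⟩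
      refine conn_induct hM (f₀ ⁻¹' Set.range f) z hz ?_ x
      rintro x y ⟨t, ht⟩ hxy
      by_contra hy
      have h1 : G.Adj (f t) (f₀ y) := by
        rw [ht]; exact f₀.map_adj_iff.2 hxy
      have h2 := (hp.2 t (f₀ y) hy).1 h1
      apply hcon
      rw [← h2.1, ← h2.2, ht]
      exact ⟨⟨x, rfl⟩, ⟨y, rfl⟩⟩
    · exfalso
      push Not at hdis
      have hvr : G.Adj (f r) v := (hp.2 r v hp.1).2 ⟨rfl, rfl⟩
      by_cases hv : v ∈ Set.range f₀
      · obtain ⟨t, ht⟩ := hv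
        have h1 : G.Adj (f₀ t) (f r) := by rw [ht]; exact hvr.symm
        have h2 := (hp₀.2 t (f r) (hdis _ ⟨r, rfl⟩)).1 h1
        have hall : ∀ x, x ∈ Set.range f ∪ Set.range f₀ := by
          intro x
          refine conn_induct hG _ (f r) (Or.inl ⟨r, rfl⟩) ?_ x
          intro x y hx hxy
          by_contra hy
          rw [Set.mem_union, not_or] at hy
          rcases hx with ⟨x, rfl⟩ | ⟨x, rfl⟩
          · have h3 := (hp.2 x y hy.1).1 hxy
            exact hy.2 ⟨t, by rw [ht, h3.2]⟩
          · have h3 := (hp₀.2 x y hy.2).1 hxy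
            exact hy.1 ⟨r, by rw [h2.2, h3.2]⟩
        have h4 : (Set.range f ∪ Set.range f₀).ncard = Nat.card V := by
          rw [Set.eq_univ_of_forall hall, Set.ncard_univ]
        have h5 := Set.ncard_union_le (Set.range f) (Set.range f₀)
        rw [hcardR, hcardR] at h5
        omega
      · have hf : ∀ x, ∃ y, g y = f x := by
          intro x
          have : f x ∈ Set.range g := by
            rw [hg, ← hr₀]
            exact hdis _ ⟨x, rfl⟩
          exact this
        choose F hF using hf
        obtain ⟨v', hv'⟩ : v ∈ Set.range g := by
          rw [hg, ← hr₀]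
          exact hv
        let F' : M ↪g H := ⟨⟨F, fun a b hab => f.injective (by rw [← hF, ← hF, hab])⟩, by
          intro a b
          change H.Adj (F a) (F b) ↔ _
          rw [← g.map_adj_iff, hF, hF, f.map_adj_iff]⟩
        have hF' : ∀ x, g (F' x) = f x := hF
        have hrange : ∀ b, b ∈ Set.range F' ↔ g b ∈ Set.range f := by
          intro b
          constructor
          · rintro ⟨x, rfl⟩
            exact ⟨x, (hF' x).symm⟩
          · rintro ⟨x, hx⟩
            exact ⟨x, g.injective (by rw [hF', hx])⟩
        apply hna
        refine PCopy.appears (f := F') (v := v') ⟨?_, ?_⟩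
        · rw [hrange, hv']
          exact hp.1
        · intro x b hb
          rw [hrange] at hb
          rw [← g.map_adj_iff, hF', hp.2 x _ hb, ← hv', g.injective.eq_iff]
  -- injection
  have hch : ∀ S : copySets r M B G, ∃ (f : M ↪g G) (v : V), PCopy r f v ∧ Set.range f = S.1 := by
    rintro ⟨S, f, v, h1, h2, -⟩
    exact ⟨f, v, h1, h2⟩
  choose F v hFv hFr using hch
  have hle : Nat.card (copySets r M B G) ≤
      Nat.card (Option (Set.range f₀ × Set.range f₀)) := by
    refine Nat.card_le_card_of_injective (fun S => if h : S.1 = S₀ then none else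
      some (⟨F S r, (key (F S) (v S) (hFv S) (by rw [hFr, hr₀]; exact h)).1⟩,
        ⟨v S, (key (F S) (v S) (hFv S) (by rw [hFr, hr₀]; exact h)).2⟩)) ?_
    intro S S' h
    by_cases h1 : S.1 = S₀ <;> by_cases h2 : S'.1 = S₀
    · exact Subtype.ext (h1.trans h2.symm)
    · simp [h1, h2] at h
    · simp [h1, h2] at h
    · simp only [h1, h2, dite_false, Option.some.injEq, Prod.mk.injEq, Subtype.mk.injEq] at h
      apply Subtype.ext
      rw [← hFr S, ← hFr S']
      have e1 := hFv S
      have e2 := hFv S'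
      rw [h.2] at e1
      exact Set.Subset.antisymm (e1.range_subset hM e2 h.1) (e2.range_subset hM e1 h.1.symm)
  rw [← Nat.card_coe_set_eq]
  refine hle.trans (le_of_eq ?_)
  rw [Finite.card_option, Nat.card_prod, Nat.card_coe_set_eq, hcardR]

end

/-- Connected graphs in the class without an appearance of `(M, r)`. -/
noncomputable def badCount (C : GraphClassOn) {A : Type} (M : SimpleGraph A) (r : A) (n : ℕ) : ℕ :=
  Nat.card {G : SimpleGraph (Fin n) // (C _ G ∧ G.Connected) ∧ ¬ Appears M r G}

theorem count_bad {C : GraphClassOn} (hIso : ClassIsoInvariant C) (hAdd : ClassAddable C)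
    {A : Type} [Finite A] (M : SimpleGraph A) (r : A) (hM : C _ M) (hMc : M.Connected) (n : ℕ)
    (hn : Nat.card A < n) :
    (n + Nat.card A).choose (Nat.card A) * (n * badCount C M r n) ≤
      (Nat.card A * Nat.card A + 1) * connCount C (n + Nat.card A) := by
  classical
  obtain ⟨h, hh⟩ : ∃ h, h = Nat.card A := ⟨_, rfl⟩
  rw [← hh]
  have hsplit : ∀ T : {T : Finset (Fin (n + h)) // T.card = h}, ∃ e : A ⊕ Fin n ≃ Fin (n + h),
      Set.range (e ∘ Sum.inl) = (T.1 : Set (Fin (n + h))) := by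
    rintro ⟨T, hT⟩
    apply exists_split
    · rw [Nat.card_coe_set_eq, Set.ncard_coe_finset, hT, hh]
    · simp [hh, add_comm]
  choose e he using hsplit
  let Z := Σ G : {G : SimpleGraph (Fin (n + h)) // C _ G ∧ G.Connected},
    copySets r M (Fin n) G.1
  have h1 : Nat.card Z ≤ (h * h + 1) * connCount C (n + h) := by
    obtain ⟨_⟩ := nonempty_fintype {G : SimpleGraph (Fin (n + h)) // C _ G ∧ G.Connected}
    rw [Nat.card_sigma, mul_comm, connCount, Nat.card_eq_fintype_card, ← smul_eq_mul]
    refine Finset.sum_le_card_nsmul _ _ _ (fun G _ => ?_)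
    have := card_copySets (r := r) (B := Fin n) hMc G.2.2 (by
      rw [Nat.card_eq_fintype_card (α := Fin (n + h)), Fintype.card_fin]
      omega)
    rw [← hh] at this
    rw [Nat.card_coe_set_eq]
    exact this
  refine le_trans ?_ h1
  have h2 : (n + h).choose h * (n * badCount C M r n) =
      Nat.card ({T : Finset (Fin (n + h)) // T.card = h} ×
      (Fin n × {G : SimpleGraph (Fin n) // (C _ G ∧ G.Connected) ∧ ¬ Appears M r G})) := by
    rw [Nat.card_prod, Nat.card_prod, badCount, Nat.card_eq_fintype_card (α := Fin n),
      Fintype.card_fin]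
    congr 1
    rw [Nat.card_eq_fintype_card, Fintype.card_finset_len, Fintype.card_fin]
  rw [h2]
  have hadj : ∀ (e : A ⊕ Fin n ≃ Fin (n + h)) (G : SimpleGraph (Fin n)) (v : Fin n) x y,
      ((joinG M r G v).comap e.symm).Adj (e x) (e y) ↔ (joinG M r G v).Adj x y := by
    intro e G v x y
    simp
  refine Nat.card_le_card_of_injective (β := Z) (fun x => ⟨⟨(joinG M r x.2.2.1 x.2.1).comap
    (e x.1).symm, ?_, ?_⟩, ⟨(x.1.1 : Set (Fin (n + h))), ?_⟩⟩) ?_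
  · refine (hIso _ _ _ _ ⟨SimpleGraph.Iso.comap (e x.1).symm _⟩).2 ?_
    exact join_class hIso hAdd hM x.2.2.2.1.1
  · rw [(SimpleGraph.Iso.comap (e x.1).symm (joinG M r x.2.2.1 x.2.1)).connected_iff]
    exact join_connected hMc x.2.2.2.1.2
  · obtain ⟨T, v, G, ⟨hG, hGc⟩, hGa⟩ := x
    simp only
    refine ⟨⟨⟨fun a => e T (Sum.inl a), fun a b h => by simpa using h⟩, ?_⟩, e T (Sum.inr v), ?_,
      he T, G, ⟨⟨fun a => e T (Sum.inr a), fun a b h => by simpa using h⟩, ?_⟩, ?_, hGa⟩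
    · intro a b
      exact (hadj _ _ _ _ _).trans (joinG_ll a b)
    · refine ⟨?_, ?_⟩
      · rintro ⟨a, ha⟩
        have := (e T).injective ha
        simp at this
      · intro x b hb
        obtain ⟨b, rfl⟩ := (e T).surjective b
        rcases b with b | b
        · exact absurd ⟨b, rfl⟩ hb
        · refine (hadj _ _ _ _ _).trans ?_
          rw [joinG_lr, (e T).injective.eq_iff, Sum.inr.injEq]
    · intro a b
      exact (hadj _ _ _ _ _).trans (joinG_rr a b)
    · rw [← he T]
      ext x
      obtain ⟨x, rfl⟩ := (e T).surjective x
      rcases x with x | x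
      · constructor
        · rintro ⟨b, hb⟩
          have := (e T).injective hb
          simp at this
        · intro hx
          exact absurd ⟨x, rfl⟩ hx
      · constructor
        · rintro - ⟨b, hb⟩
          have := (e T).injective hb
          simp at this
        · intro hx
          exact ⟨x, rfl⟩
  · rintro ⟨T, v, ⟨G, hG⟩⟩ ⟨T', v', ⟨G', hG'⟩⟩ heq
    have h3 : (T.1 : Set (Fin (n + h))) = T'.1 := congrArg (fun z : Z => z.2.1) heq
    have h4 : T = T' := Subtype.ext (by exact_mod_cast h3)
    subst h4
    have h5 := congrArg (fun z : Z => z.1.1) heq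
    simp only at h5
    have h6 : ∀ x y, (joinG M r G v).Adj x y ↔ (joinG M r G' v').Adj x y := by
      intro x y
      rw [← hadj (e T), h5, hadj]
    have h7 : G = G' := by
      ext a b
      rw [← joinG_rr (G := M) (r := r) (u := v), h6, joinG_rr]
    have h8 : v = v' := (((joinG_lr r v).1 ((h6 (Sum.inl r) (Sum.inr v)).1
      ((joinG_lr r v).2 ⟨rfl, rfl⟩)))).2
    subst h7 h8
    rfl


section

theorem conn_series_le {a κ : ℕ → ℝ} {γ x : ℝ} (ha : ∀ n, 0 < a n) (hκ0 : ∀ n, 0 ≤ κ n)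
    (hκa : ∀ n, κ n ≤ a n) (hκz : κ 0 = 0)
    (h2 : ∀ n, 1 ≤ n → ∑ j ∈ Finset.range (n + 1), (j * κ j) * (((n - j : ℕ) : ℝ) * κ (n - j)) ≤
      2 * ((n : ℝ) - 1) * κ n)
    (hr : Tendsto (fun n => a (n + 1) / a n) atTop (𝓝 γ)) (hx : 0 < x) (hxγ : γ * x < 1) (N : ℕ) :
    ∑ n ∈ Finset.range N, κ n * x ^ n ≤ 1 / 2 := by
  have s1 : Summable (fun n : ℕ => (n : ℝ) * a n * x ^ n) := by
    refine summable_of_ratio_test_tendsto_lt_one hxγ ?_ ?_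
    · filter_upwards [eventually_ge_atTop 1] with n hn
      have h1 : (0 : ℝ) < n := by exact_mod_cast hn
      have := ha n
      positivity
    · have h1 : Tendsto (fun n : ℕ => (1 + 1 / (n : ℝ)) * (a (n + 1) / a n) * x) atTop
          (𝓝 ((1 + 0) * γ * x)) :=
        ((tendsto_const_nhds.add tendsto_one_div_atTop_nhds_zero_nat).mul hr).mul_const x
      rw [show γ * x = (1 + 0) * γ * x by ring]
      refine h1.congr' ?_
      filter_upwards [eventually_ge_atTop 1] with n hn
      have h2 : (0 : ℝ) < n := by exact_mod_cast hn
      have h3 := ha n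
      have h4 := ha (n + 1)
      have h5 : (0 : ℝ) < ((n + 1 : ℕ) : ℝ) * a (n + 1) * x ^ (n + 1) := by positivity
      have h6 : (0 : ℝ) < (n : ℝ) * a n * x ^ n := by positivity
      rw [Real.norm_of_nonneg h5.le, Real.norm_of_nonneg h6.le]
      push_cast
      field_simp
      ring
  have s2 : Summable (fun n : ℕ => (n : ℝ) * κ n * x ^ n) := by
    refine s1.of_nonneg_of_le (fun n => ?_) (fun n => ?_)
    · have := hκ0 n
      positivity
    · have := hκa n
      gcongr
  have s3 : Summable (fun n : ℕ => κ n * x ^ n) := by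
    refine s2.of_nonneg_of_le (fun n => ?_) (fun n => ?_)
    · have := hκ0 n
      positivity
    · rcases Nat.eq_zero_or_pos n with rfl | hn
      · simp [hκz]
      · have h1 : (1 : ℝ) ≤ n := by exact_mod_cast hn
        have h2 : 0 ≤ κ n * x ^ n := by have := hκ0 n; positivity
        nlinarith
  set t := ∑' n : ℕ, (n : ℝ) * κ n * x ^ n with ht
  set K := ∑' n : ℕ, κ n * x ^ n with hK
  have hsq : t * t = ∑' n : ℕ, ∑ j ∈ Finset.range (n + 1),
      ((j : ℝ) * κ j * x ^ j) * (((n - j : ℕ) : ℝ) * κ (n - j) * x ^ (n - j)) := by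
    rw [ht]
    exact tsum_mul_tsum_eq_tsum_sum_range_of_summable_norm s2.norm s2.norm
  have hterm : ∀ n : ℕ, ∑ j ∈ Finset.range (n + 1),
      ((j : ℝ) * κ j * x ^ j) * (((n - j : ℕ) : ℝ) * κ (n - j) * x ^ (n - j)) =
      (∑ j ∈ Finset.range (n + 1), (j * κ j) * (((n - j : ℕ) : ℝ) * κ (n - j))) * x ^ n := by
    intro n
    rw [Finset.sum_mul]
    refine Finset.sum_congr rfl fun j hj => ?_
    have : x ^ n = x ^ j * x ^ (n - j) := by
      rw [← pow_add]; congr 1; simp at hj; omega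
    rw [this]; ring
  have s4 : Summable (fun n : ℕ => 2 * ((n : ℝ) * κ n * x ^ n) - 2 * (κ n * x ^ n)) :=
    (s2.mul_left 2).sub (s3.mul_left 2)
  have hle : t * t ≤ 2 * t - 2 * K := by
    rw [hsq]
    have : 2 * t - 2 * K = ∑' n : ℕ, (2 * ((n : ℝ) * κ n * x ^ n) - 2 * (κ n * x ^ n)) := by
      rw [(s2.mul_left 2).tsum_sub (s3.mul_left 2), tsum_mul_left, tsum_mul_left]
    rw [this]
    refine Summable.tsum_le_tsum (fun n => ?_) ?_ s4
    · rw [hterm]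
      rcases Nat.eq_zero_or_pos n with rfl | hn
      · simp [hκz]
      · have := mul_le_mul_of_nonneg_right (h2 n hn) (pow_pos hx n).le
        linarith
    · exact summable_norm_sum_mul_range_of_summable_norm s2.norm s2.norm |>.of_norm
  have hK2 : K ≤ 1 / 2 := by nlinarith [sq_nonneg (t - 1)]
  refine le_trans (s3.sum_le_tsum _ fun n _ => ?_) hK2
  have := hκ0 n
  positivity

theorem class_poly_le {a κ : ℕ → ℝ} (ha : ∀ n, 0 < a n) (ha0 : a 0 = 1) (hκ0 : ∀ n, 0 ≤ κ n)
    (hκz : κ 0 = 0)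
    (h1 : ∀ n : ℕ, n * a n = ∑ j ∈ Finset.range (n + 1), j * κ j * a (n - j)) (N : ℕ)
    {x : ℝ} (hx : 0 ≤ x) :
    ∑ n ∈ Finset.range (N + 1), a n * x ^ n ≤
      Real.exp (∑ n ∈ Finset.range (N + 1), κ n * x ^ n) := by
  let F : ℝ → ℝ := fun x => ∑ n ∈ Finset.range (N + 1), a n * x ^ n
  let K : ℝ → ℝ := fun x => ∑ n ∈ Finset.range (N + 1), κ n * x ^ n
  have hder : ∀ (b : ℕ → ℝ) (x : ℝ), HasDerivAt (fun x => ∑ n ∈ Finset.range (N + 1), b n * x ^ n)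
      (∑ n ∈ Finset.range (N + 1), b n * (n * x ^ (n - 1))) x := by
    intro b x
    refine HasDerivAt.fun_sum fun n _ => ?_
    exact (hasDerivAt_pow n x).const_mul (b n)
  have hxder : ∀ (b : ℕ → ℝ) (x : ℝ), x * (∑ n ∈ Finset.range (N + 1), b n * (n * x ^ (n - 1))) =
      ∑ n ∈ Finset.range (N + 1), n * b n * x ^ n := by
    intro b x
    rw [Finset.mul_sum]
    refine Finset.sum_congr rfl fun n _ => ?_
    rcases n with _ | n
    · simp
    · rw [Nat.add_sub_cancel, pow_succ]; ring
  let G : ℝ → ℝ := fun x => F x * Real.exp (-K x)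
  have hG : ∀ x, HasDerivAt G
      ((∑ n ∈ Finset.range (N + 1), a n * (n * x ^ (n - 1))) * Real.exp (-K x) +
      F x * (Real.exp (-K x) * -(∑ n ∈ Finset.range (N + 1), κ n * (n * x ^ (n - 1))))) x := by
    intro x
    exact (hder a x).mul ((hder κ x).neg.exp)
  have hanti : AntitoneOn G (Set.Ici 0) := by
    refine antitoneOn_of_deriv_nonpos (convex_Ici 0)
      (fun x _ => (hG x).continuousAt.continuousWithinAt)
      (fun x _ => (hG x).differentiableAt.differentiableWithinAt) ?_
    intro x hx
    rw [interior_Ici] at hx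
    have hx : 0 < x := hx
    rw [(hG x).deriv]
    have key : x * (∑ n ∈ Finset.range (N + 1), a n * (n * x ^ (n - 1))) ≤
        (x * (∑ n ∈ Finset.range (N + 1), κ n * (n * x ^ (n - 1)))) * F x := by
      rw [hxder, hxder]
      have e1 : ∀ n ∈ Finset.range (N + 1), (n : ℝ) * a n * x ^ n =
          ∑ p ∈ Finset.HasAntidiagonal.antidiagonal n, (p.1 * κ p.1 * x ^ p.1) * (a p.2 * x ^ p.2) := by
        intro n _
        rw [h1, Finset.sum_mul, Finset.Nat.sum_antidiagonal_eq_sum_range_succ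
          (fun i j => ((i : ℝ) * κ i * x ^ i) * (a j * x ^ j))]
        refine Finset.sum_congr rfl fun j hj => ?_
        have : x ^ n = x ^ j * x ^ (n - j) := by
          rw [← pow_add]; congr 1; simp at hj; omega
        rw [this]; ring
      rw [Finset.sum_congr rfl e1, Finset.sum_sigma', Finset.sum_mul_sum, ← Finset.sum_product']
      have hinj : ∀ p ∈ (Finset.range (N + 1)).sigma (fun n => Finset.HasAntidiagonal.antidiagonal n),
          ∀ p' ∈ (Finset.range (N + 1)).sigma (fun n => Finset.HasAntidiagonal.antidiagonal n),
          p.2 = p'.2 → p = p' := by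
        rintro ⟨n, p⟩ hp ⟨n', p'⟩ hp' h
        simp only [Finset.mem_sigma, Finset.HasAntidiagonal.mem_antidiagonal] at hp hp' h
        subst h
        have : n = n' := hp.2.symm.trans hp'.2
        subst this
        rfl
      rw [← Finset.sum_image (f := fun p : ℕ × ℕ => ((p.1 : ℝ) * κ p.1 * x ^ p.1) *
        (a p.2 * x ^ p.2)) (g := fun p : (Σ _ : ℕ, ℕ × ℕ) => p.2) hinj]
      refine Finset.sum_le_sum_of_subset_of_nonneg ?_ ?_
      · intro p hp
        simp only [Finset.mem_image, Finset.mem_sigma, Finset.HasAntidiagonal.mem_antidiagonal,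
          Finset.mem_range] at hp
        obtain ⟨⟨n, q⟩, ⟨h3, h4⟩, h5⟩ := hp
        simp only at h3 h4 h5
        subst h5
        simp only [Finset.mem_product, Finset.mem_range]
        omega
      · intro p _ _
        have := hκ0 p.1
        have := ha p.2
        positivity
    have key2 : (∑ n ∈ Finset.range (N + 1), a n * (n * x ^ (n - 1))) ≤
        (∑ n ∈ Finset.range (N + 1), κ n * (n * x ^ (n - 1))) * F x := by
      refine le_of_mul_le_mul_left ?_ hx
      linarith
    have := Real.exp_pos (-K x)
    nlinarith
  have h3 := hanti (Set.mem_Ici.2 le_rfl) (Set.mem_Ici.2 hx) hx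
  have h4 : G 0 = 1 := by
    have hF0 : F 0 = 1 := by
      simp only [F, Finset.sum_range_succ']
      simp [ha0]
    have hK0 : K 0 = 0 := by
      simp only [K, Finset.sum_range_succ']
      simp [hκz]
    simp [G, hF0, hK0]
  rw [h4] at h3
  have h5 : F x * Real.exp (-K x) ≤ 1 := h3
  rw [Real.exp_neg, ← div_eq_mul_inv, div_le_one (Real.exp_pos _)] at h5
  exact h5

theorem class_series {a κ : ℕ → ℝ} {γ : ℝ} (ha : ∀ n, 0 < a n) (ha0 : a 0 = 1)
    (hκ0 : ∀ n, 0 ≤ κ n)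
    (hκa : ∀ n, κ n ≤ a n) (hκz : κ 0 = 0) (hγ : 0 < γ)
    (h1 : ∀ n : ℕ, n * a n = ∑ j ∈ Finset.range (n + 1), j * κ j * a (n - j))
    (h2 : ∀ n, 1 ≤ n → ∑ j ∈ Finset.range (n + 1), (j * κ j) * (((n - j : ℕ) : ℝ) * κ (n - j)) ≤
      2 * ((n : ℝ) - 1) * κ n)
    (hr : Tendsto (fun n => a (n + 1) / a n) atTop (𝓝 γ)) (N : ℕ) :
    ∑ n ∈ Finset.range (N + 1), a n * γ⁻¹ ^ n ≤ Real.exp (1 / 2) := by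
  have hcont : Tendsto (fun x : ℝ => ∑ n ∈ Finset.range (N + 1), a n * x ^ n) (𝓝[<] γ⁻¹)
      (𝓝 (∑ n ∈ Finset.range (N + 1), a n * γ⁻¹ ^ n)) := by
    have : Continuous (fun x : ℝ => ∑ n ∈ Finset.range (N + 1), a n * x ^ n) := by fun_prop
    exact this.continuousAt.tendsto.mono_left nhdsWithin_le_nhds
  refine le_of_tendsto hcont ?_
  have hpos : (0 : ℝ) < γ⁻¹ := inv_pos.2 hγ
  filter_upwards [Ioo_mem_nhdsLT hpos] with x hx
  refine (class_poly_le ha ha0 hκ0 hκz h1 N hx.1.le).trans ?_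
  refine Real.exp_le_exp.2 (conn_series_le ha hκ0 hκa hκz h2 hr hx.1 ?_ _)
  have := mul_lt_mul_of_pos_left hx.2 hγ
  rwa [mul_inv_cancel₀ hγ.ne'] at this

theorem contraction {d : ℕ → ℝ} {q : ℝ} (hq0 : 0 ≤ q) (hq : q < 1) (hd0 : ∀ n, 0 ≤ d n)
    (hd1 : ∀ n, d n ≤ 1)
    (hstep : ∀ D, 0 ≤ D → (∀ᶠ n in atTop, d n ≤ D) → ∀ ε > 0, ∀ᶠ n in atTop, d n ≤ q * D + ε) :
    Tendsto d atTop (𝓝 0) := by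
  let S : Set ℝ := {D | 0 ≤ D ∧ ∀ᶠ n in atTop, d n ≤ D}
  have hne : S.Nonempty := ⟨1, zero_le_one, Eventually.of_forall hd1⟩
  have hbdd : BddBelow S := ⟨0, fun D hD => hD.1⟩
  have h0 : 0 ≤ sInf S := le_csInf hne fun D hD => hD.1
  have hle : sInf S ≤ q * sInf S := by
    refine le_of_forall_pos_le_add fun ε hε => ?_
    obtain ⟨D, hD, hDlt⟩ := exists_lt_of_csInf_lt hne (show sInf S < sInf S + ε / 2 by linarith)
    have hmem : q * D + ε / 2 ∈ S := ⟨by have := mul_nonneg hq0 hD.1; linarith,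
      hstep D hD.1 hD.2 _ (by linarith)⟩
    have := csInf_le hbdd hmem
    nlinarith
  have hz : sInf S = 0 := by nlinarith
  rw [Metric.tendsto_atTop']
  intro ε hε
  obtain ⟨D, hD, hDlt⟩ := exists_lt_of_csInf_lt hne (show sInf S < ε by rw [hz]; exact hε)
  obtain ⟨N, hN⟩ := eventually_atTop.1 hD.2
  refine ⟨N, fun n hn => ?_⟩
  rw [Real.dist_eq, sub_zero, abs_of_nonneg (hd0 n)]
  exact (hN n hn.le).trans_lt hDlt

theorem ratio_shift {a : ℕ → ℝ} {γ : ℝ} (ha : ∀ n, 0 < a n) (hγ : 0 < γ)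
    (hr : Tendsto (fun n => a (n + 1) / a n) atTop (𝓝 γ)) (h : ℕ) :
    Tendsto (fun n => a (n - h) / a n) atTop (𝓝 (γ⁻¹ ^ h)) := by
  have aux : Tendsto (fun n => a n / a (n + h)) atTop (𝓝 (γ⁻¹ ^ h)) := by
    induction h with
    | zero =>
      simp only [Nat.add_zero, pow_zero]
      refine tendsto_const_nhds.congr fun n => ?_
      rw [div_self (ha n).ne']
    | succ h ih =>
      have h1 : Tendsto (fun n => a (n + h) / a (n + h + 1)) atTop (𝓝 γ⁻¹) := by
        have := (hr.inv₀ hγ.ne').comp (tendsto_add_atTop_nat h)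
        refine this.congr fun n => ?_
        simp
      have := ih.mul h1
      rw [← pow_succ] at this
      refine this.congr fun n => ?_
      have := (ha (n + h)).ne'
      have := (ha (n + h + 1)).ne'
      rw [← add_assoc]
      field_simp
  rw [← tendsto_add_atTop_iff_nat h]
  refine aux.congr fun n => ?_
  simp

theorem conn_limit {a κ : ℕ → ℝ} {γ : ℝ} (ha : ∀ n, 0 < a n) (ha0 : a 0 = 1)
    (hκ0 : ∀ n, 0 ≤ κ n) (hκa : ∀ n, κ n ≤ a n) (hγ : 0 < γ)
    (hr : Tendsto (fun n => a (n + 1) / a n) atTop (𝓝 γ))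
    (hW : ∀ N, ∑ n ∈ Finset.range (N + 1), a n * γ⁻¹ ^ n ≤ Real.exp (1 / 2))
    (hrec : ∀ m n, 2 * m < n → |1 - ∑ h ∈ Finset.range (m + 1), a h * κ (n - h) / a n| ≤
      2 / ((m : ℝ) + 1)) :
    ∃ L, Real.exp (-(1 / 2 : ℝ)) ≤ L ∧ Tendsto (fun n => κ n / a n) atTop (𝓝 L) := by
  let w : ℕ → ℝ := fun n => a n * γ⁻¹ ^ n
  have hw0 : ∀ n, 0 ≤ w n := fun n => by
    have := ha n
    positivity
  have hWr : ∀ N, ∑ n ∈ Finset.range N, w n ≤ Real.exp (1 / 2) := fun N =>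
    (Finset.sum_le_sum_of_subset_of_nonneg (Finset.range_mono (Nat.le_succ N))
      (fun n _ _ => hw0 n)).trans (hW N)
  have hs : Summable w := summable_of_sum_range_le hw0 hWr
  set W := ∑' n, w n with hWd
  have hWle : W ≤ Real.exp (1 / 2) := Real.tsum_le_of_sum_range_le hw0 hWr
  have hwz : w 0 = 1 := by simp [w, ha0]
  have hW1 : 1 ≤ W := by
    rw [← hwz]
    exact hs.le_tsum 0 fun n _ => hw0 n
  have hW2 : W < 2 := by
    refine hWle.trans_lt ?_
    have h1 : Real.exp (1 / 2) * Real.exp (1 / 2) = Real.exp 1 := by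
      rw [← Real.exp_add]; norm_num
    have h2 := Real.exp_one_lt_d9
    have h3 := Real.exp_pos (1 / 2)
    nlinarith
  have hWpos : 0 < W := by linarith
  refine ⟨W⁻¹, ?_, ?_⟩
  · rw [Real.exp_neg]
    exact inv_anti₀ hWpos hWle
  have hL0 : 0 ≤ W⁻¹ := inv_nonneg.2 hWpos.le
  have hL1 : W⁻¹ ≤ 1 := inv_le_one_of_one_le₀ hW1
  have hp0 : ∀ n, 0 ≤ κ n / a n := fun n => div_nonneg (hκ0 n) (ha n).le
  have hp1 : ∀ n, κ n / a n ≤ 1 := fun n => (div_le_one (ha n)).2 (hκa n)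
  have hd : Tendsto (fun n => |κ n / a n - W⁻¹|) atTop (𝓝 0) := by
    refine contraction (q := W - 1) (by linarith) (by linarith) (fun n => abs_nonneg _)
      (fun n => ?_) ?_
    · rw [abs_le]
      constructor <;> linarith [hp0 n, hp1 n]
    intro D hD hev ε hε
    -- choose m
    obtain ⟨m, hm1, hm2⟩ : ∃ m : ℕ, 2 / ((m : ℝ) + 1) ≤ ε / 3 ∧
        |W - ∑ h ∈ Finset.range (m + 1), w h| ≤ ε / 3 := by
      have t1 : Tendsto (fun m : ℕ => 2 / ((m : ℝ) + 1)) atTop (𝓝 0) := by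
        have := (tendsto_one_div_add_atTop_nhds_zero_nat (𝕜 := ℝ)).const_mul 2
        rw [mul_zero] at this
        refine this.congr fun n => ?_
        ring
      have t2 : Tendsto (fun m : ℕ => |W - ∑ h ∈ Finset.range (m + 1), w h|) atTop (𝓝 0) := by
        have := (hs.hasSum.tendsto_sum_nat.comp (tendsto_add_atTop_nat 1)).const_sub W
        rw [← hWd, sub_self] at this
        simpa using this.abs
      have e1 := t1.eventually (eventually_le_nhds (show 0 < ε / 3 by linarith))
      have e2 := t2.eventually (eventually_le_nhds (show 0 < ε / 3 by linarith))
      exact (e1.and e2).exists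
    have t3 : Tendsto (fun n => ∑ h ∈ Finset.range (m + 1), |a h * (a (n - h) / a n) - w h|) atTop
        (𝓝 0) := by
      have : Tendsto (fun n => ∑ h ∈ Finset.range (m + 1), |a h * (a (n - h) / a n) - w h|) atTop
        (𝓝 (∑ h ∈ Finset.range (m + 1), |a h * γ⁻¹ ^ h - w h|)) := by
        refine tendsto_finsetSum _ fun h _ => ?_
        exact (((ratio_shift ha hγ hr h).const_mul (a h)).sub_const _).abs
      simpa [w] using this
    have e3 := t3.eventually (eventually_le_nhds (show 0 < ε / 3 by linarith))
    obtain ⟨N, hN⟩ := eventually_atTop.1 hev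
    filter_upwards [e3, eventually_ge_atTop (N + m), eventually_gt_atTop (2 * m)] with n hn1 hn2 hn3
    have hr1 := hrec m n hn3
    set p : ℕ → ℝ := fun n => κ n / a n with hpd
    have hterm : ∀ h, a h * κ (n - h) / a n = a h * (a (n - h) / a n) * p (n - h) := by
      intro h
      have := (ha (n - h)).ne'
      have := (ha n).ne'
      simp only [hpd]
      field_simp
    simp only [hterm] at hr1
    -- compare to the sum with w
    have c1 : |∑ h ∈ Finset.range (m + 1), a h * (a (n - h) / a n) * p (n - h) -
        ∑ h ∈ Finset.range (m + 1), w h * p (n - h)| ≤ ε / 3 := by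
      rw [← Finset.sum_sub_distrib]
      refine (Finset.abs_sum_le_sum_abs _ _).trans (le_trans (Finset.sum_le_sum fun h _ => ?_) hn1)
      rw [← sub_mul, abs_mul]
      have : |p (n - h)| ≤ 1 := by
        rw [abs_le]; constructor <;> linarith [hp0 (n - h), hp1 (n - h)]
      exact mul_le_of_le_one_right (abs_nonneg _) this
    have c2 : ∑ h ∈ Finset.range (m + 1), w h * p (n - h) =
        (∑ h ∈ Finset.range m, w (h + 1) * p (n - (h + 1))) + p n := by
      rw [Finset.sum_range_succ']
      simp [hwz]
    have c3 : |∑ h ∈ Finset.range m, w (h + 1) * p (n - (h + 1)) -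
        (∑ h ∈ Finset.range m, w (h + 1)) * W⁻¹| ≤ (W - 1) * D := by
      rw [Finset.sum_mul, ← Finset.sum_sub_distrib]
      have hsum : ∑ h ∈ Finset.range m, w (h + 1) ≤ W - 1 := by
        have := hs.sum_le_tsum (Finset.range (m + 1)) fun n _ => hw0 n
        rw [Finset.sum_range_succ', hwz] at this
        linarith
      calc _ ≤ ∑ h ∈ Finset.range m, w (h + 1) * D := by
            refine (Finset.abs_sum_le_sum_abs _ _).trans (Finset.sum_le_sum fun h hh => ?_)
            rw [← mul_sub, abs_mul, abs_of_nonneg (hw0 _)]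
            refine mul_le_mul_of_nonneg_left ?_ (hw0 _)
            refine hN _ ?_
            simp at hh
            omega
        _ = (∑ h ∈ Finset.range m, w (h + 1)) * D := by rw [Finset.sum_mul]
        _ ≤ _ := mul_le_mul_of_nonneg_right hsum hD
    have c4 : |1 - (∑ h ∈ Finset.range m, w (h + 1)) * W⁻¹ - W⁻¹| ≤ ε / 3 := by
      have : 1 - (∑ h ∈ Finset.range m, w (h + 1)) * W⁻¹ - W⁻¹ =
          (W - ∑ h ∈ Finset.range (m + 1), w h) * W⁻¹ := by
        rw [Finset.sum_range_succ', hwz]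
        field_simp
        ring
      rw [this, abs_mul, abs_of_nonneg hL0]
      exact (mul_le_of_le_one_right (abs_nonneg _) hL1).trans hm2
    rw [c2] at c1
    rw [abs_le] at *
    constructor <;> linarith [hr1.1, hr1.2, c1.1, c1.2, c3.1, c3.2, c4.1, c4.2]
  have := tendsto_zero_iff_abs_tendsto_zero _ |>.2 hd
  simpa using this.add_const W⁻¹

theorem converges_of_approx {f : ℕ → ℝ} {g : ℕ → ℕ → ℝ} {l ε : ℕ → ℝ}
    (hg : ∀ m, Tendsto (g m) atTop (𝓝 (l m))) (hε : Tendsto ε atTop (𝓝 0))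
    (hfg : ∀ m, ∀ᶠ n in atTop, |f n - g m n| ≤ ε m) : ∃ p, Tendsto f atTop (𝓝 p) := by
  apply cauchySeq_tendsto_of_complete
  rw [Metric.cauchySeq_iff']
  intro δ hδ
  obtain ⟨m, hm⟩ := (hε.eventually (gt_mem_nhds (show 0 < δ / 4 by linarith))).exists
  have e1 : ∀ᶠ n in atTop, |g m n - l m| < δ / 4 := by
    have := (Metric.tendsto_nhds.1 (hg m)) (δ / 4) (by linarith)
    simpa [Real.dist_eq] using this
  obtain ⟨N, hN⟩ := eventually_atTop.1 (e1.and (hfg m))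
  refine ⟨N, fun n hn => ?_⟩
  have h1 := hN n hn
  have h2 := hN N le_rfl
  rw [Real.dist_eq]
  rw [abs_lt, abs_le] at h1 h2
  rw [abs_lt]
  constructor <;> linarith [h1.1.1, h1.1.2, h1.2.1, h1.2.2, h2.1.1, h2.1.2, h2.2.1, h2.2.2]

end


section
variable {C : GraphClassOn}

theorem card_split_prop {α : Type} [Finite α] (P R : α → Prop) :
    Nat.card {x // P x} = Nat.card {x // P x ∧ R x} + Nat.card {x // P x ∧ ¬ R x} := by
  have h1 : ∀ Q : α → Prop, Nat.card {x // Q x} = {x | Q x}.ncard := fun Q => rfl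
  rw [h1, h1, h1]
  have h := Set.ncard_inter_add_ncard_sdiff_eq_ncard {x | P x} {x | R x} (Set.toFinite _)
  exact h.symm

theorem card_mono_prop {α : Type} [Finite α] {P R : α → Prop} (h : ∀ x, P x → R x) :
    Nat.card {x // P x} ≤ Nat.card {x // R x} :=
  Nat.card_le_card_of_injective (fun x : {x // P x} => (⟨x.1, h _ x.2⟩ : {x // R x}))
    (fun x y hxy => Subtype.ext (by simpa using hxy))

theorem choose_norm {n h : ℕ} (hn : h ≤ n) (x y c : ℝ) :
    (n.choose h : ℝ) * (x * y) / c =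
      (y / h.factorial) * (x / (n - h).factorial) / (c / n.factorial) := by
  have h1 : (n.choose h : ℝ) * h.factorial * (n - h).factorial = n.factorial := by
    exact_mod_cast Nat.choose_mul_factorial_mul_factorial hn
  have h2 : (h.factorial : ℝ) ≠ 0 := by exact_mod_cast h.factorial_ne_zero
  have h3 : ((n - h).factorial : ℝ) ≠ 0 := by exact_mod_cast (n - h).factorial_ne_zero
  rcases eq_or_ne c 0 with rfl | hc
  · simp
  rw [← h1]
  field_simp

theorem classCount_zero (hD : ClassDecomposable C)
    (hne : ∀ n : ℕ, 1 ≤ n → ∃ G : SimpleGraph (Fin n), C (Fin n) G) : classCount C 0 = 1 := by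
  refine le_antisymm ?_ (classCount_pos hD hne 0)
  have : Subsingleton {G : SimpleGraph (Fin 0) // C (Fin 0) G} :=
    ⟨fun a b => Subtype.ext (Subsingleton.elim _ _)⟩
  exact Finite.card_le_one_iff_subsingleton.2 this

theorem prob_approx (hIso : ClassIsoInvariant C) (hAdd : ClassAddable C)
    (hne : ∀ n : ℕ, 1 ≤ n → ∃ G : SimpleGraph (Fin n), C (Fin n) G)
    (Q : ∀ {V : Type}, SimpleGraph V → Prop)
    (hQ : ∀ {V W : Type} {G : SimpleGraph V} {H : SimpleGraph W}, (G ≃g H) → (Q G ↔ Q H))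
    (m n : ℕ) (hn : 2 * m < n) :
    |classProb C n (fun G => Q G) - ∑ h ∈ Finset.range (m + 1),
      (n.choose h : ℝ) * pairCount C Q n h / classCount C n| ≤ 2 / ((m : ℝ) + 1) := by
  have hc : (0 : ℝ) < classCount C n := by exact_mod_cast classCount_pos hAdd.1 hne n
  have h1 := card_split_prop (fun G : SimpleGraph (Fin n) => C _ G ∧ Q G)
    (fun G => ∃ T : Finset (Fin n), T.card ≤ m ∧ IsComp G (T : Set (Fin n))ᶜ)
  rw [count_main hIso hAdd.1 Q hQ n m hn] at h1
  have h2 : Nat.card {G : SimpleGraph (Fin n) // (C _ G ∧ Q G) ∧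
      ¬ ∃ T : Finset (Fin n), T.card ≤ m ∧ IsComp G (T : Set (Fin n))ᶜ} ≤
      Nat.card {G : SimpleGraph (Fin n) // C _ G ∧
      ¬ ∃ T : Finset (Fin n), T.card ≤ m ∧ IsComp G (T : Set (Fin n))ᶜ} :=
    card_mono_prop fun G hG => ⟨hG.1.1, hG.2⟩
  have h3 := count_tail hAdd n m (by omega)
  set X := Nat.card {G : SimpleGraph (Fin n) // (C _ G ∧ Q G) ∧
      ¬ ∃ T : Finset (Fin n), T.card ≤ m ∧ IsComp G (T : Set (Fin n))ᶜ}
  have h4 : (m + 1) * X ≤ 2 * classCount C n := (Nat.mul_le_mul_left _ h2).trans h3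
  have h4' : ((m : ℝ) + 1) * X ≤ 2 * classCount C n := by exact_mod_cast h4
  have h5 : classProb C n (fun G => Q G) - ∑ h ∈ Finset.range (m + 1),
      (n.choose h : ℝ) * pairCount C Q n h / classCount C n = X / classCount C n := by
    rw [classProb, h1, ← Finset.sum_div]
    push_cast
    ring
  rw [h5, abs_of_nonneg (by positivity), div_le_div_iff₀ hc (by positivity)]
  linarith

theorem pairCount_true (n h : ℕ) :
    pairCount C (fun _ => True) n h = connCount C (n - h) * classCount C h := by
  rw [pairCount, connCount, classCount, ← Nat.card_prod]
  exact Nat.card_congr ((Equiv.subtypeEquivRight fun p => by rw [and_true]).trans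
    (Equiv.subtypeProdEquivProd (p := fun G : SimpleGraph (Fin (n - h)) => C _ G ∧ G.Connected)
      (q := fun G : SimpleGraph (Fin h) => C _ G)))

theorem card_prod_prop {α β : Type} (P : α → Prop) (R : β → Prop) :
    Nat.card {p : α × β // P p.1 ∧ R p.2} = Nat.card {x // P x} * Nat.card {y // R y} := by
  rw [← Nat.card_prod]
  exact Nat.card_congr Equiv.subtypeProdEquivProd

theorem pairCount_fo {A : Type} (M : SimpleGraph A) (r : A) (φ : Language.graph.Sentence)
    (hM : ∀ m₁ m₂ (J₁ : SimpleGraph (Fin m₁)) (J₂ : SimpleGraph (Fin m₂)),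
      C _ J₁ → C _ J₂ → J₁.Connected → J₂.Connected → Appears M r J₁ → Appears M r J₂ →
      ∀ b (H : SimpleGraph (Fin b)), SatFO (J₁ ⊕g H) φ ↔ SatFO (J₂ ⊕g H) φ) (h : ℕ) :
    ∃ Θ : ℕ, ∀ n, |(pairCount C (fun G => SatFO G φ) n h : ℝ) - connCount C (n - h) * Θ| ≤
      (badCount C M r (n - h) : ℝ) * classCount C h := by
  let θ : SimpleGraph (Fin h) → Prop := fun H => ∃ (m : ℕ) (J : SimpleGraph (Fin m)),
    (C _ J ∧ J.Connected) ∧ Appears M r J ∧ SatFO (J ⊕g H) φ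
  refine ⟨Nat.card {H : SimpleGraph (Fin h) // C _ H ∧ θ H}, fun n => ?_⟩
  have h1 := card_split_prop (fun p : SimpleGraph (Fin (n - h)) × SimpleGraph (Fin h) =>
    ((C _ p.1 ∧ p.1.Connected) ∧ C _ p.2) ∧ SatFO (p.1 ⊕g p.2) φ) (fun p => Appears M r p.1)
  have h2 : Nat.card {p : SimpleGraph (Fin (n - h)) × SimpleGraph (Fin h) //
      (((C _ p.1 ∧ p.1.Connected) ∧ C _ p.2) ∧ SatFO (p.1 ⊕g p.2) φ) ∧ Appears M r p.1} =
      Nat.card {G : SimpleGraph (Fin (n - h)) // (C _ G ∧ G.Connected) ∧ Appears M r G} *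
      Nat.card {H : SimpleGraph (Fin h) // C _ H ∧ θ H} := by
    rw [← card_prod_prop]
    refine Nat.card_congr (Equiv.subtypeEquivRight fun p => ?_)
    constructor
    · rintro ⟨⟨⟨ha, hb⟩, hs⟩, hp⟩
      exact ⟨⟨ha, hp⟩, hb, n - h, p.1, ha, hp, hs⟩
    · rintro ⟨⟨ha, hp⟩, hb, m, J, hJ, hJp, hs⟩
      exact ⟨⟨⟨ha, hb⟩, (hM _ _ _ _ hJ.1 ha.1 hJ.2 ha.2 hJp hp _ _).1 hs⟩, hp⟩
  have h3 : Nat.card {p : SimpleGraph (Fin (n - h)) × SimpleGraph (Fin h) //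
      (((C _ p.1 ∧ p.1.Connected) ∧ C _ p.2) ∧ SatFO (p.1 ⊕g p.2) φ) ∧ ¬ Appears M r p.1} ≤
      badCount C M r (n - h) * classCount C h := by
    rw [badCount, classCount, ← card_prod_prop]
    exact card_mono_prop fun p hp => ⟨⟨hp.1.1.1, hp.2⟩, hp.1.1.2⟩
  have h4 := card_split_prop (fun G : SimpleGraph (Fin (n - h)) => C _ G ∧ G.Connected)
    (fun G => Appears M r G)
  have h5 : Nat.card {H : SimpleGraph (Fin h) // C _ H ∧ θ H} ≤ classCount C h :=
    card_mono_prop fun H hH => hH.1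
  rw [h2] at h1
  rw [pairCount, h1, connCount, h4]
  change |_ - (((_ + badCount C M r (n - h) : ℕ) : ℝ)) * _| ≤ _
  have h3' : (_ : ℝ) ≤ _ := Nat.cast_le (α := ℝ).2 h3
  have h5' : (_ : ℝ) ≤ _ := Nat.cast_le (α := ℝ).2 h5
  push_cast at h3' ⊢
  have h6 := mul_le_mul_of_nonneg_left h5' (Nat.cast_nonneg (α := ℝ) (badCount C M r (n - h)))
  have h7 : (0 : ℝ) ≤ (badCount C M r (n - h) : ℝ) *
    Nat.card {H : SimpleGraph (Fin h) // C _ H ∧ θ H} := by positivity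
  have h8 : (0 : ℝ) ≤ Nat.card {p : SimpleGraph (Fin (n - h)) × SimpleGraph (Fin h) //
      (((C _ p.1 ∧ p.1.Connected) ∧ C _ p.2) ∧ SatFO (p.1 ⊕g p.2) φ) ∧ ¬ Appears M r p.1} := by
    positivity
  rw [abs_le]
  constructor <;> nlinarith

/-- Exponential normalisation of the class counts. -/
noncomputable def aSeq (C : GraphClassOn) (n : ℕ) : ℝ := (classCount C n : ℝ) / n.factorial
/-- Exponential normalisation of the connected counts. -/
noncomputable def kSeq (C : GraphClassOn) (n : ℕ) : ℝ := (connCount C n : ℝ) / n.factorial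
/-- Exponential normalisation of the bad counts. -/
noncomputable def bSeq (C : GraphClassOn) {A : Type} (M : SimpleGraph A) (r : A) (n : ℕ) : ℝ :=
  (badCount C M r n : ℝ) / n.factorial

theorem aSeq_pos (hD : ClassDecomposable C)
    (hne : ∀ n : ℕ, 1 ≤ n → ∃ G : SimpleGraph (Fin n), C (Fin n) G) (n : ℕ) : 0 < aSeq C n := by
  have : (0 : ℝ) < classCount C n := by exact_mod_cast classCount_pos hD hne n
  have h2 : (0 : ℝ) < n.factorial := by exact_mod_cast n.factorial_pos
  exact div_pos this h2

theorem kSeq_nonneg (n : ℕ) : 0 ≤ kSeq C n := by unfold kSeq; positivity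

theorem kSeq_le (n : ℕ) : kSeq C n ≤ aSeq C n := by
  have : (connCount C n : ℝ) ≤ classCount C n := by exact_mod_cast connCount_le n
  unfold kSeq aSeq
  gcongr

theorem ratio_div (x y : ℝ) (n : ℕ) : (x / n.factorial) / (y / n.factorial) = x / y := by
  have h2 : (n.factorial : ℝ) ≠ 0 := by exact_mod_cast n.factorial_ne_zero
  exact div_div_div_cancel_right₀ h2 x y

theorem aSeq_ratio {γ : ℝ} (hγ : Tendsto (fun n : ℕ => (classCount C n : ℝ) /
    (n * classCount C (n - 1))) atTop (𝓝 γ)) :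
    Tendsto (fun n => aSeq C (n + 1) / aSeq C n) atTop (𝓝 γ) := by
  refine (hγ.comp (tendsto_add_atTop_nat 1)).congr fun n => ?_
  have h2 : (n.factorial : ℝ) ≠ 0 := by exact_mod_cast n.factorial_ne_zero
  simp only [Function.comp, aSeq, Nat.add_sub_cancel, Nat.factorial_succ]
  push_cast
  have h3 : (n : ℝ) + 1 ≠ 0 := by positivity
  rcases eq_or_ne (classCount C n : ℝ) 0 with h | h
  · simp [h]
  field_simp

theorem gamma_pos (hIso : ClassIsoInvariant C) (hAdd : ClassAddable C)
    (hne : ∀ n : ℕ, 1 ≤ n → ∃ G : SimpleGraph (Fin n), C (Fin n) G)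
    {γ : ℝ} (hγ : Tendsto (fun n : ℕ => (classCount C n : ℝ) /
    (n * classCount C (n - 1))) atTop (𝓝 γ)) : 0 < γ := by
  have : (1 / 2 : ℝ) ≤ γ := by
    refine ge_of_tendsto hγ ?_
    filter_upwards [eventually_ge_atTop 2] with n hn
    have h1 : (n : ℝ) * classCount C (n - 1) ≤ 2 * classCount C n := by
      exact_mod_cast count_growth hIso hAdd hne n hn
    have h2 : (0 : ℝ) < classCount C (n - 1) := by exact_mod_cast classCount_pos hAdd.1 hne (n - 1)
    have h3 : (0 : ℝ) < n := by exact_mod_cast (by omega : 0 < n)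
    rw [div_le_div_iff₀ (by norm_num) (by positivity)]
    linarith
  linarith

theorem aSeq_one (hIso : ClassIsoInvariant C) (hD : ClassDecomposable C) (n : ℕ) :
    (n : ℝ) * aSeq C n = ∑ j ∈ Finset.range (n + 1), (j : ℝ) * kSeq C j * aSeq C (n - j) := by
  have h := count_one hIso hD n
  have h' : (n : ℝ) * classCount C n = ∑ j ∈ Finset.range (n + 1), (n.choose j : ℝ) *
      (j * connCount C j * classCount C (n - j)) := by exact_mod_cast h
  rw [aSeq, ← mul_div_assoc, h', Finset.sum_div]
  refine Finset.sum_congr rfl fun j hj => ?_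
  have hn : j ≤ n := by simp at hj; omega
  have h1 : (n.choose j : ℝ) * j.factorial * (n - j).factorial = n.factorial := by
    exact_mod_cast Nat.choose_mul_factorial_mul_factorial hn
  have h2 : (j.factorial : ℝ) ≠ 0 := by exact_mod_cast j.factorial_ne_zero
  have h3 : ((n - j).factorial : ℝ) ≠ 0 := by exact_mod_cast (n - j).factorial_ne_zero
  have h4 : (n.choose j : ℝ) ≠ 0 := by exact_mod_cast (Nat.choose_pos hn).ne'
  rw [kSeq, aSeq, ← h1]
  field_simp

theorem kSeq_two (hIso : ClassIsoInvariant C) (hAdd : ClassAddable C) (n : ℕ) (hn1 : 1 ≤ n) :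
    ∑ j ∈ Finset.range (n + 1), ((j : ℝ) * kSeq C j) * (((n - j : ℕ) : ℝ) * kSeq C (n - j)) ≤
      2 * ((n : ℝ) - 1) * kSeq C n := by
  have h := count_two hIso hAdd n
  have h' : (∑ j ∈ Finset.range (n + 1), (n.choose j : ℝ) *
      (j * connCount C j * (((n - j : ℕ) : ℝ) * connCount C (n - j)))) ≤
      2 * ((n : ℝ) - 1) * connCount C n := by
    have h2 : ((n - 1 : ℕ) : ℝ) = (n : ℝ) - 1 := by push_cast [hn1]; ring
    rw [← h2]
    exact_mod_cast h
  have hf : (0 : ℝ) < n.factorial := by exact_mod_cast n.factorial_pos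
  rw [kSeq, ← mul_div_assoc, le_div_iff₀ hf]
  refine le_trans (le_of_eq ?_) h'
  rw [Finset.sum_mul]
  refine Finset.sum_congr rfl fun j hj => ?_
  have hn : j ≤ n := by simp at hj; omega
  have h1 : (n.choose j : ℝ) * j.factorial * (n - j).factorial = n.factorial := by
    exact_mod_cast Nat.choose_mul_factorial_mul_factorial hn
  have h2 : (j.factorial : ℝ) ≠ 0 := by exact_mod_cast j.factorial_ne_zero
  have h3 : ((n - j).factorial : ℝ) ≠ 0 := by exact_mod_cast (n - j).factorial_ne_zero
  rw [kSeq, kSeq, ← h1]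
  field_simp

theorem kSeq_limit (hIso : ClassIsoInvariant C) (hAdd : ClassAddable C)
    (hne : ∀ n : ℕ, 1 ≤ n → ∃ G : SimpleGraph (Fin n), C (Fin n) G)
    {γ : ℝ} (hγ : Tendsto (fun n : ℕ => (classCount C n : ℝ) /
    (n * classCount C (n - 1))) atTop (𝓝 γ)) :
    ∃ L, Real.exp (-(1 / 2 : ℝ)) ≤ L ∧ Tendsto (fun n => kSeq C n / aSeq C n) atTop (𝓝 L) := by
  have ha := aSeq_pos hAdd.1 hne
  have ha0 : aSeq C 0 = 1 := by simp [aSeq, classCount_zero hAdd.1 hne]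
  have hz : kSeq C 0 = 0 := by simp [kSeq, connCount_zero]
  have hg := gamma_pos hIso hAdd hne hγ
  have hr := aSeq_ratio hγ
  refine conn_limit ha ha0 kSeq_nonneg kSeq_le hg hr
    (class_series ha ha0 kSeq_nonneg kSeq_le hz hg (aSeq_one hIso hAdd.1)
      (kSeq_two hIso hAdd) hr) ?_
  intro m n hmn
  have h1 := prob_approx hIso hAdd hne (fun _ => True) (fun _ => Iff.rfl) m n hmn
  have hc : (classCount C n : ℝ) ≠ 0 := by exact_mod_cast (classCount_pos hAdd.1 hne n).ne'
  have h2 : classProb C n (fun _ => True) = 1 := by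
    simp only [classProb, and_true]
    exact div_self hc
  rw [h2] at h1
  refine le_trans (le_of_eq ?_) h1
  congr 2
  refine Finset.sum_congr rfl fun h hh => ?_
  rw [pairCount_true]
  push_cast
  rw [choose_norm (by simp at hh; omega)]
  rfl

theorem bSeq_limit (hIso : ClassIsoInvariant C) (hAdd : ClassAddable C)
    (hne : ∀ n : ℕ, 1 ≤ n → ∃ G : SimpleGraph (Fin n), C (Fin n) G)
    {γ : ℝ} (hγ : Tendsto (fun n : ℕ => (classCount C n : ℝ) /
    (n * classCount C (n - 1))) atTop (𝓝 γ))
    {A : Type} [Finite A] (M : SimpleGraph A) (r : A) (hM : C _ M) (hMc : M.Connected) :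
    Tendsto (fun n => bSeq C M r n / aSeq C n) atTop (𝓝 0) := by
  have ha := aSeq_pos hAdd.1 hne
  have hg := gamma_pos hIso hAdd hne hγ
  have hr := aSeq_ratio hγ
  set h := Nat.card A with hh
  have t1 := (((ratio_shift ha hg hr h).comp (tendsto_add_atTop_nat h)).inv₀
    (by positivity)).mul (tendsto_one_div_atTop_nhds_zero_nat (𝕜 := ℝ))
  have t2 := t1.const_mul ((h.factorial : ℝ) * (h * h + 1))
  rw [mul_zero, mul_zero] at t2
  refine tendsto_of_tendsto_of_tendsto_of_le_of_le' tendsto_const_nhds t2 ?_ ?_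
  · filter_upwards with n
    have := ha n
    unfold bSeq
    positivity
  · filter_upwards [eventually_gt_atTop h] with n hn
    have h1 := count_bad hIso hAdd M r hM hMc n hn
    rw [← hh] at h1
    have h1' : ((n + h).choose h : ℝ) * (n * badCount C M r n) ≤
      ((h : ℝ) * h + 1) * connCount C (n + h) := by exact_mod_cast h1
    have h2 : (connCount C (n + h) : ℝ) ≤ classCount C (n + h) := by
      exact_mod_cast connCount_le (n + h)
    have h3 : ((n + h).choose h : ℝ) * h.factorial * n.factorial = (n + h).factorial := by
      have := Nat.choose_mul_factorial_mul_factorial (Nat.le_add_left h n)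
      rw [Nat.add_sub_cancel] at this
      exact_mod_cast this
    have h4 : (0 : ℝ) < (n + h).factorial := by exact_mod_cast (n + h).factorial_pos
    have h5 : (0 : ℝ) < n.factorial := by exact_mod_cast n.factorial_pos
    have h6 : (0 : ℝ) < h.factorial := by exact_mod_cast h.factorial_pos
    have hn0 : (0 : ℝ) < n := by exact_mod_cast (by omega : 0 < n)
    have h7 : (n : ℝ) * bSeq C M r n ≤ h.factorial * (h * h + 1) * aSeq C (n + h) := by
      rw [bSeq, aSeq, ← mul_div_assoc, ← mul_div_assoc, div_le_div_iff₀ h5 h4, ← h3]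
      have h8 : ((n + h).choose h : ℝ) * (n * badCount C M r n) ≤
        ((h : ℝ) * h + 1) * classCount C (n + h) := h1'.trans (by gcongr)
      have := mul_le_mul_of_nonneg_right h8 (mul_pos h6 h5).le
      linarith
    have h9 := ha n
    have h10 := ha (n + h)
    simp only [Function.comp, Nat.add_sub_cancel, inv_div]
    rw [div_le_iff₀ h9]
    have : (h.factorial : ℝ) * (h * h + 1) * (aSeq C (n + h) / aSeq C n * (1 / n)) * aSeq C n =
        h.factorial * (h * h + 1) * aSeq C (n + h) / n := by
      field_simp
    rw [this, le_div_iff₀ hn0]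
    linarith

theorem fo_term_limit (hIso : ClassIsoInvariant C) (hAdd : ClassAddable C)
    (hne : ∀ n : ℕ, 1 ≤ n → ∃ G : SimpleGraph (Fin n), C (Fin n) G)
    {γ L : ℝ} (hγ : Tendsto (fun n : ℕ => (classCount C n : ℝ) /
    (n * classCount C (n - 1))) atTop (𝓝 γ))
    (hL : Tendsto (fun n => kSeq C n / aSeq C n) atTop (𝓝 L))
    {A : Type} (M : SimpleGraph A) (r : A)
    (hb : Tendsto (fun n => bSeq C M r n / aSeq C n) atTop (𝓝 0)) (φ : Language.graph.Sentence)
    (hM : ∀ m₁ m₂ (J₁ : SimpleGraph (Fin m₁)) (J₂ : SimpleGraph (Fin m₂)),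
      C _ J₁ → C _ J₂ → J₁.Connected → J₂.Connected → Appears M r J₁ → Appears M r J₂ →
      ∀ b (H : SimpleGraph (Fin b)), SatFO (J₁ ⊕g H) φ ↔ SatFO (J₂ ⊕g H) φ) (h : ℕ) :
    ∃ l : ℝ, Tendsto (fun n : ℕ => (n.choose h : ℝ) * pairCount C (fun G => SatFO G φ) n h /
      classCount C n) atTop (𝓝 l) := by
  have ha := aSeq_pos hAdd.1 hne
  have hg := gamma_pos hIso hAdd hne hγ
  have hs := ratio_shift ha hg (aSeq_ratio hγ) h
  obtain ⟨Θ, hΘ⟩ := pairCount_fo M r φ hM h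
  have hshift : Tendsto (fun n : ℕ => n - h) atTop atTop := tendsto_sub_atTop_nat h
  have hk : Tendsto (fun n => kSeq C (n - h) / aSeq C n) atTop (𝓝 (L * γ⁻¹ ^ h)) := by
    refine ((hL.comp hshift).mul hs).congr fun n => ?_
    have := (ha (n - h)).ne'
    simp only [Function.comp]
    field_simp
  have hbb : Tendsto (fun n => bSeq C M r (n - h) / aSeq C n) atTop (𝓝 0) := by
    have := (hb.comp hshift).mul hs
    rw [zero_mul] at this
    refine this.congr fun n => ?_
    have := (ha (n - h)).ne'
    simp only [Function.comp]
    field_simp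
  have t1 := hk.const_mul ((Θ : ℝ) / h.factorial)
  have t2 := hbb.const_mul ((classCount C h : ℝ) / h.factorial)
  rw [mul_zero] at t2
  refine ⟨(Θ : ℝ) / h.factorial * (L * γ⁻¹ ^ h), ?_⟩
  · refine t1.congr_dist ?_
    refine squeeze_zero' (Eventually.of_forall fun n => dist_nonneg) ?_ t2
    filter_upwards [eventually_ge_atTop h] with n hn
    have hc : (0 : ℝ) < classCount C n := by exact_mod_cast classCount_pos hAdd.1 hne n
    have e1 : (Θ : ℝ) / h.factorial * (kSeq C (n - h) / aSeq C n) =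
        (n.choose h : ℝ) * (connCount C (n - h) * Θ) / classCount C n := by
      rw [choose_norm hn, ← mul_div_assoc]; rfl
    have e2 : (classCount C h : ℝ) / h.factorial * (bSeq C M r (n - h) / aSeq C n) =
        (n.choose h : ℝ) * (badCount C M r (n - h) * classCount C h) / classCount C n := by
      rw [choose_norm hn, ← mul_div_assoc]; rfl
    rw [e1, e2, dist_comm, Real.dist_eq, ← sub_div, ← mul_sub, abs_div, abs_mul,
      abs_of_pos hc, abs_of_nonneg (Nat.cast_nonneg (α := ℝ) (n.choose h))]
    have := hΘ n
    gcongr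

theorem fo_converges (hIso : ClassIsoInvariant C) (hAdd : ClassAddable C)
    (hne : ∀ n : ℕ, 1 ≤ n → ∃ G : SimpleGraph (Fin n), C (Fin n) G)
    {γ L : ℝ} (hγ : Tendsto (fun n : ℕ => (classCount C n : ℝ) /
    (n * classCount C (n - 1))) atTop (𝓝 γ))
    (hL : Tendsto (fun n => kSeq C n / aSeq C n) atTop (𝓝 L))
    {A : Type} (M : SimpleGraph A) (r : A)
    (hb : Tendsto (fun n => bSeq C M r n / aSeq C n) atTop (𝓝 0)) (φ : Language.graph.Sentence)
    (hM : ∀ m₁ m₂ (J₁ : SimpleGraph (Fin m₁)) (J₂ : SimpleGraph (Fin m₂)),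
      C _ J₁ → C _ J₂ → J₁.Connected → J₂.Connected → Appears M r J₁ → Appears M r J₂ →
      ∀ b (H : SimpleGraph (Fin b)), SatFO (J₁ ⊕g H) φ ↔ SatFO (J₂ ⊕g H) φ) :
    ∃ p : ℝ, Tendsto (fun n : ℕ => classProb C n (fun G => SatFO G φ)) atTop (𝓝 p) := by
  choose l hl using fo_term_limit hIso hAdd hne hγ hL M r hb φ hM
  refine converges_of_approx (ε := fun m : ℕ => 2 / ((m : ℝ) + 1))
    (g := fun m n => ∑ h ∈ Finset.range (m + 1),
      (n.choose h : ℝ) * pairCount C (fun G => SatFO G φ) n h / classCount C n)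
    (l := fun m => ∑ h ∈ Finset.range (m + 1), l h)
    (fun m => tendsto_finsetSum _ fun h _ => hl h) ?_ ?_
  · have := (tendsto_one_div_add_atTop_nhds_zero_nat (𝕜 := ℝ)).const_mul 2
    rw [mul_zero] at this
    exact this.congr fun m => by ring
  · intro m
    filter_upwards [eventually_gt_atTop (2 * m)] with n hn
    exact prob_approx hIso hAdd hne (fun G => SatFO G φ) (fun e => SatFO_iso e φ) m n hn

theorem sat_sum_empty {m : ℕ} (J : SimpleGraph (Fin m)) (H : SimpleGraph (Fin 0))
    (φ : Language.graph.Sentence) : SatFO (J ⊕g H) φ ↔ SatFO J φ := by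
  refine SatFO_iso (G := J ⊕g H) (H := J) ⟨Equiv.sumEmpty _ _, ?_⟩ φ
  intro a b
  rcases a with a | a
  · rcases b with b | b
    · simp
    · exact b.elim0
  · exact a.elim0

theorem conn_prob (hD : ClassDecomposable C)
    (hne : ∀ n : ℕ, 1 ≤ n → ∃ G : SimpleGraph (Fin n), C (Fin n) G) (n : ℕ) :
    classProb C n (fun G => ¬ G.Connected) = 1 - kSeq C n / aSeq C n := by
  have hc : (classCount C n : ℝ) ≠ 0 := by exact_mod_cast (classCount_pos hD hne n).ne'
  have h := card_split_prop (fun G : SimpleGraph (Fin n) => C _ G) (fun G => G.Connected)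
  have h' : (classCount C n : ℝ) = connCount C n +
      Nat.card {G : SimpleGraph (Fin n) // C _ G ∧ ¬ G.Connected} := by exact_mod_cast h
  rw [kSeq, aSeq, ratio_div, classProb, eq_sub_iff_add_eq, ← add_div, add_comm, ← h', div_self hc]

theorem main_aux (hIso : ClassIsoInvariant C) (hAdd : ClassAddable C) (hSmooth : ClassSmooth C)
    (hne : ∀ n : ℕ, 1 ≤ n → ∃ G : SimpleGraph (Fin n), C (Fin n) G) :
    ∃ c : ℝ, Tendsto (fun n : ℕ => classProb C n (fun G => ¬ G.Connected)) atTop (𝓝 c) ∧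
      c ≤ 1 - Real.exp (-(1 / 2 : ℝ)) ∧ ∀ φ : Language.graph.Sentence,
      ∃ p : ℝ, Tendsto (fun n : ℕ => classProb C n (fun G => SatFO G φ)) atTop (𝓝 p) ∧
        (p ≤ c ∨ 1 - c ≤ p) := by
  obtain ⟨γ, hγ⟩ := hSmooth
  obtain ⟨L, hLe, hL⟩ := kSeq_limit hIso hAdd hne hγ
  have hcl : Tendsto (fun n : ℕ => classProb C n (fun G => ¬ G.Connected)) atTop (𝓝 (1 - L)) :=
    (hL.const_sub 1).congr fun n => (conn_prob hAdd.1 hne n).symm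
  refine ⟨1 - L, hcl, by linarith, fun φ => ?_⟩
  obtain ⟨A, hfin, M, r, hMC, hMc, hM⟩ := model_exists hIso hAdd hne φ
  have hb := bSeq_limit hIso hAdd hne hγ M r hMC hMc
  obtain ⟨p, hp⟩ := fo_converges hIso hAdd hne hγ hL M r hb φ hM
  refine ⟨p, hp, ?_⟩
  have hbe : ∀ n, bSeq C M r n / aSeq C n = (badCount C M r n : ℝ) / classCount C n :=
    fun n => ratio_div _ _ n
  have hke : ∀ n, kSeq C n / aSeq C n = (connCount C n : ℝ) / classCount C n :=
    fun n => ratio_div _ _ n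
  by_cases hθ : ∃ (m : ℕ) (J : SimpleGraph (Fin m)),
      C _ J ∧ J.Connected ∧ Appears M r J ∧ SatFO J φ
  · right
    obtain ⟨m, J, hJ1, hJ2, hJ3, hJ4⟩ := hθ
    have h1 : ∀ n, kSeq C n / aSeq C n - bSeq C M r n / aSeq C n ≤
        classProb C n (fun G => SatFO G φ) := by
      intro n
      rw [hbe, hke, ← sub_div, classProb]
      refine div_le_div_of_nonneg_right ?_ (Nat.cast_nonneg _)
      rw [sub_le_iff_le_add]
      have h2 := card_split_prop (fun G : SimpleGraph (Fin n) => C _ G ∧ G.Connected)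
        (fun G => Appears M r G)
      have h3 : Nat.card {G : SimpleGraph (Fin n) // (C _ G ∧ G.Connected) ∧ Appears M r G} ≤
          Nat.card {G : SimpleGraph (Fin n) // C _ G ∧ SatFO G φ} :=
        card_mono_prop fun G hG => ⟨hG.1.1, (sat_sum_empty G ⊥ φ).1
          ((hM _ _ _ _ hJ1 hG.1.1 hJ2 hG.1.2 hJ3 hG.2 0 ⊥).1 ((sat_sum_empty J ⊥ φ).2 hJ4))⟩
      have h4 : connCount C n ≤ Nat.card {G : SimpleGraph (Fin n) // C _ G ∧ SatFO G φ} +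
          badCount C M r n := by
        rw [connCount, badCount, h2]
        omega
      exact_mod_cast h4
    have := le_of_tendsto_of_tendsto' (hL.sub hb) hp h1
    linarith
  · left
    have h1 : ∀ n, classProb C n (fun G => SatFO G φ) ≤
        classProb C n (fun G => ¬ G.Connected) + bSeq C M r n / aSeq C n := by
      intro n
      rw [hbe, classProb, classProb, ← add_div]
      refine div_le_div_of_nonneg_right ?_ (Nat.cast_nonneg _)
      have h2 := card_split_prop (fun G : SimpleGraph (Fin n) => C _ G ∧ SatFO G φ)
        (fun G => G.Connected)
      have h3 : Nat.card {G : SimpleGraph (Fin n) // (C _ G ∧ SatFO G φ) ∧ G.Connected} ≤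
          badCount C M r n :=
        card_mono_prop fun G hG => ⟨⟨hG.1.1, hG.2⟩, fun hap =>
          hθ ⟨n, G, hG.1.1, hG.2, hap, hG.1.2⟩⟩
      have h4 : Nat.card {G : SimpleGraph (Fin n) // (C _ G ∧ SatFO G φ) ∧ ¬ G.Connected} ≤
          Nat.card {G : SimpleGraph (Fin n) // C _ G ∧ ¬ G.Connected} :=
        card_mono_prop fun G hG => ⟨hG.1.1, hG.2⟩
      have h5 : Nat.card {G : SimpleGraph (Fin n) // C _ G ∧ SatFO G φ} ≤
          Nat.card {G : SimpleGraph (Fin n) // C _ G ∧ ¬ G.Connected} + badCount C M r n := by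
        omega
      exact_mod_cast h5
    have := le_of_tendsto_of_tendsto' hp (hcl.add hb) h1
    linarith

end

/-- Limiting probabilities of first-order sentences on a smooth addable
class cluster near `0` and `1`: they lie in `[0, c] ∪ [1 - c, 1]` where `c ≤ 1 - e^{-1/2}`
is the limiting probability of being disconnected. -/
theorem fo_limit_probabilities_cluster
    (C : GraphClassOn) (hIso : ClassIsoInvariant C) (hAdd : ClassAddable C)
    (hSmooth : ClassSmooth C)
    (hne : ∀ n : ℕ, 1 ≤ n → ∃ G : SimpleGraph (Fin n), C (Fin n) G) :
    ∃ c : ℝ,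
      Tendsto (fun n : ℕ => classProb C n (fun G => ¬G.Connected)) atTop (𝓝 c) ∧
      c ≤ 1 - Real.exp (-(1 / 2 : ℝ)) ∧
      ∀ φ : Language.graph.Sentence, ∃ p : ℝ,
        Tendsto (fun n : ℕ => classProb C n (fun G => SatFO G φ)) atTop (𝓝 p) ∧
        (p ≤ c ∨ 1 - c ≤ p) := by
  exact main_aux hIso hAdd hSmooth hne
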